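/- The monoid Γ₊ has left and right cancellation: for every u ∈ [1,γ] \ {1} and all A, B ∈ Γ₊, if ⟨u⟩·A = ⟨u⟩·B then A = B, and if A·⟨u⟩ = B·⟨u⟩ then A = B. -/

import Mathlib

variable {B : Type*} {W : Type*} [Group W] {M : CoxeterMatrix B}

/-- The reflection length of `w`: the least `k` such that `w` is a product of `k`
reflections (conjugates of simple reflections). -/
noncomputable def rlen (cs : CoxeterSystem M W) (w : W) : ℕ :=
  sInf {k | ∃ l : List W, (∀ t ∈ l, cs.IsReflection t) ∧ l.length = k ∧ l.prod = w}

/-- The reflection (absolute) order on `W`: `u ≤ w` iff `ℓ(w) = ℓ(u) + ℓ(u⁻¹w)`. -/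
def rle (cs : CoxeterSystem M W) (u w : W) : Prop :=
  rlen cs w = rlen cs u + rlen cs (u⁻¹ * w)

/-- A Coxeter element: a conjugate of a product of all the simple reflections,
each occurring exactly once, in some order. -/
def IsCoxeterElement [Fintype B] (cs : CoxeterSystem M W) (γ : W) : Prop :=
  ∃ (v : W) (l : List B), l.Nodup ∧ (∀ i : B, i ∈ l) ∧ γ = v * cs.wordProd l * v⁻¹

/-- The generating set of the poset group/monoid: the interval `[1,γ]` minus the identity. -/
abbrev NCGen (cs : CoxeterSystem M W) (γ : W) : Type _ :=
  {w : W // w ≠ 1 ∧ rle cs w γ}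

/-- The defining relations of the positive monoid `Γ₊(W,γ)`:
`⟨w₁⟩⟨w₂⟩ = ⟨w₃⟩` whenever `w₁w₂ = w₃` in `W` and `ℓ(w₁) + ℓ(w₂) = ℓ(w₃)`. -/
def posRels (cs : CoxeterSystem M W) (γ : W) :
    FreeMonoid (NCGen cs γ) → FreeMonoid (NCGen cs γ) → Prop :=
  fun x y => ∃ w₁ w₂ w₃ : NCGen cs γ,
    x = FreeMonoid.of w₁ * FreeMonoid.of w₂ ∧ y = FreeMonoid.of w₃ ∧
    (w₁ : W) * (w₂ : W) = (w₃ : W) ∧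
    rlen cs (w₁ : W) + rlen cs (w₂ : W) = rlen cs (w₃ : W)

/-- The positive monoid `Γ₊(W,γ)`, presented by the generators `⟨w⟩`, `w ∈ [1,γ] \ {1}`,
and the relations `posRels`. -/
abbrev PosMonoid (cs : CoxeterSystem M W) (γ : W) := PresentedMonoid (posRels cs γ)

open Classical in
/-- The generator `⟨w⟩` of `Γ₊(W,γ)` for `w ∈ [1,γ]`, interpreting `⟨1⟩` as the
identity of the monoid (and defaulting to the identity off the interval). -/
noncomputable def pgen (cs : CoxeterSystem M W) (γ : W) (w : W) : PosMonoid cs γ :=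
  if h : w ≠ 1 ∧ rle cs w γ then PresentedMonoid.of (posRels cs γ) ⟨w, h⟩ else 1

/-!
Let `V` be the geometric representation of `W`, with its root system `Φ`. The Coxeter element
`γ = s₁ ⋯ sₙ` (up to conjugation) determines a positive definite, non-symmetric form `E` on `V`
(`coxeterForm`), unitriangular on the simple roots and with twice the Tits form as its
symmetrisation. A product of reflections over a list of roots that is unitriangular for `E` depends
only on the span of the list, and the list is a shortest factorisation of it.

Rotating a simple system (moving its first member `a` to the end as `-a` and reflecting the other
members in `a`) does not change the product of its reflections. Since this product has finite order
and fixes no nonzero vector of the span, every positive root becomes the first member of some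
rotation. Removing it there splits off the reflection in it and leaves a simple system of a smaller
span. Hence the elements of `[1,γ]` correspond to the spans of subsystems, and the reflection order
on `[1,γ]` to inclusion of spans.

To find the meet of two such spans, rotate until the first member `a` lies in both of them, remove
`a` and repeat. A common root always yields such an `a`: as long as the first member does not lie in
both spans, the common positive roots stay positive under rotation, but no nonzero vector stays in
the cone forever. The argument is uniform in the type of `W`.

Given meets, cancellation follows by a normal form argument. The generator `⟨s⟩` acts on pairs
`(a, X)` with `a ∈ [1,γ]` and `X ∈ Γ₊` by `(a, X) ↦ (s h, ⟨h⁻¹a⟩X)`, where `h = a ∧ s⁻¹γ`. This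
respects the defining relations, and `(a, X) ↦ ⟨a⟩X` intertwines it with left multiplication, so
that an element of `Γ₊` is recovered from its action on `(1, 1)`. As `⟨a⟩X` can be read off
`(s h, ⟨h⁻¹a⟩X)`, comparing the actions of `⟨s⟩A` and `⟨s⟩C` gives `A = C`. Right cancellation is
left cancellation for `γ⁻¹`, by inversion in `W`.
-/

namespace DualBraid

section Form

variable {V : Type*} [AddCommGroup V] [Module ℝ V]

/-! ### Cones, spans and unitriangular lists -/

/-- The orthogonal reflection in `a` for the symmetrisation `E x y + E y x` of `E`. It is an
involution when `E a a = 1`. -/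
def formReflection (E : LinearMap.BilinForm ℝ V) (a : V) : Module.End ℝ V :=
  Module.preReflection a (E a + E.flip a)

/-- The linear span of the members of a list. -/
def listSpan (l : List V) : Submodule ℝ V := Submodule.span ℝ {x | x ∈ l}

/-- The convex cone generated by the members of a list. For a simple system, its roots are the
positive ones. -/
def listCone (l : List V) : PointedCone ℝ V := PointedCone.hull ℝ {x | x ∈ l}

/-- A list `θ₁, …, θₘ` is unitriangular for the bilinear form `E` when the matrix `E θᵢ θⱼ` is
upper unitriangular. -/
structure IsUnitriangular (E : LinearMap.BilinForm ℝ V) (l : List V) : Prop where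
  one : ∀ a ∈ l, E a a = 1
  pairwise : l.Pairwise fun a b => E b a = 0

variable {E : LinearMap.BilinForm ℝ V} {a b p x y : V} {l l' : List V}

theorem formReflection_apply (a x : V) : formReflection E a x = x - (E a x + E x a) • a := by
  simp [formReflection, Module.preReflection_apply]

theorem formReflection_self (ha : E a a = 1) : formReflection E a a = -a := by
  rw [formReflection_apply, ha]; module

theorem formReflection_sub_smul (ha : E a a = 1) (x : V) :
    formReflection E a (x - E x a • a) = x - E a x • a := by
  rw [map_sub, map_smul, formReflection_self ha, formReflection_apply]
  module

theorem formReflection_formReflection (ha : E a a = 1) (x : V) :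
    formReflection E a (formReflection E a x) = x :=
  Module.involutive_preReflection (by simp [ha]; norm_num) x

theorem formReflection_mul_self (ha : E a a = 1) :
    formReflection E a * formReflection E a = 1 :=
  LinearMap.ext (formReflection_formReflection ha)

theorem formReflection_neg (a : V) : formReflection E (-a) = formReflection E a := by
  ext x; simp only [formReflection_apply, map_neg, LinearMap.neg_apply]; module

theorem formReflection_map_mul (ha : E a a = 1) (b : V) :
    formReflection E (formReflection E a b) * formReflection E a =
      formReflection E a * formReflection E b := by
  ext x
  simp only [Module.End.mul_apply, formReflection_apply, map_sub, map_smul, LinearMap.sub_apply,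
    LinearMap.smul_apply, ha, smul_eq_mul]
  module

theorem formReflection_mem {U : Submodule ℝ V} (ha : a ∈ U) (hx : x ∈ U) :
    formReflection E a x ∈ U := by
  rw [formReflection_apply]; exact sub_mem hx (U.smul_mem _ ha)

theorem form_formReflection_self (ha : E a a = 1) (x : V) :
    E (formReflection E a x) (formReflection E a x) = E x x := by
  simp only [formReflection_apply, map_sub, map_smul, LinearMap.sub_apply, LinearMap.smul_apply,
    ha, smul_eq_mul]
  ring

theorem form_formReflection_right (ha : E a a = 1) (b : V) :
    E a (formReflection E a b) = -E b a := by
  simp only [formReflection_apply, map_sub, map_smul, smul_eq_mul, ha]; ring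

theorem form_formReflection_of_perp (ha : E a a = 1) (hx : E x a = 0) (hy : E y a = 0) :
    E (formReflection E a x) (formReflection E a y) = E x y := by
  simp only [formReflection_apply, map_sub, map_smul, LinearMap.sub_apply, LinearMap.smul_apply,
    ha, smul_eq_mul, hx, hy]
  ring

theorem eq_of_eq_nonneg_smul (ha : E a a = 1) (hb : E b b = 1) {c : ℝ} (hc : 0 ≤ c)
    (h : a = c • b) : a = b := by
  subst h
  simp only [map_smul, LinearMap.smul_apply, smul_eq_mul, hb, mul_one] at ha
  rw [show c = 1 by nlinarith, one_smul]

theorem mem_listSpan (ha : a ∈ l) : a ∈ listSpan l := Submodule.subset_span ha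

theorem mem_listCone (ha : a ∈ l) : a ∈ listCone l := PointedCone.subset_hull ha

theorem mem_listSpan_of_mem_listCone (hx : x ∈ listCone l) : x ∈ listSpan l :=
  PointedCone.hull_le_span _ _ hx

theorem listSpan_le {U : Submodule ℝ V} : listSpan l ≤ U ↔ ∀ a ∈ l, a ∈ U := Submodule.span_le

theorem listCone_le {C : PointedCone ℝ V} : listCone l ≤ C ↔ ∀ a ∈ l, a ∈ C := Submodule.span_le

theorem listSpan_mono (h : l ⊆ l') : listSpan l ≤ listSpan l' := Submodule.span_mono h

theorem listCone_mono (h : l ⊆ l') : listCone l ≤ listCone l' := Submodule.span_mono h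

theorem listSpan_perm (h : l.Perm l') : listSpan l = listSpan l' :=
  le_antisymm (listSpan_mono h.subset) (listSpan_mono h.symm.subset)

theorem listCone_perm (h : l.Perm l') : listCone l = listCone l' :=
  le_antisymm (listCone_mono h.subset) (listCone_mono h.symm.subset)

theorem mem_listSpan_nil : x ∈ listSpan [] ↔ x = 0 := by simp [listSpan]

theorem mem_listCone_nil : x ∈ listCone [] ↔ x = 0 := by simp [listCone, PointedCone.hull]

theorem mem_listSpan_cons :
    x ∈ listSpan (a :: l) ↔ ∃ c : ℝ, ∃ y ∈ listSpan l, x = c • a + y := by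
  rw [listSpan, show {x | x ∈ a :: l} = insert a {x | x ∈ l} by ext; simp,
    Submodule.mem_span_insert]
  rfl

theorem mem_listCone_cons :
    x ∈ listCone (a :: l) ↔ ∃ c : ℝ, 0 ≤ c ∧ ∃ y ∈ listCone l, x = c • a + y := by
  rw [listCone, PointedCone.hull, show {x | x ∈ a :: l} = insert a {x | x ∈ l} by ext; simp,
    Submodule.mem_span_insert]
  exact ⟨fun ⟨c, y, hy, h⟩ => ⟨c, c.2, y, hy, h⟩, fun ⟨c, hc, y, hy, h⟩ => ⟨⟨c, hc⟩, y, hy, h⟩⟩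

theorem map_mem_listCone (f : V →ₗ[ℝ] V) (hx : x ∈ listCone l) : f x ∈ listCone (l.map f) := by
  have h : listCone l ≤ PointedCone.comap f (listCone (l.map f)) :=
    listCone_le.2 fun a ha => mem_listCone (List.mem_map_of_mem ha)
  exact h hx

theorem form_eq_zero_left (h : ∀ b ∈ l, E b a = 0) (hx : x ∈ listSpan l) : E x a = 0 := by
  have : listSpan l ≤ LinearMap.ker (E.flip a) := listSpan_le.2 h
  exact this hx

theorem form_eq_zero_right (h : ∀ b ∈ l, E p b = 0) (hx : x ∈ listSpan l) : E p x = 0 := by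
  have : listSpan l ≤ LinearMap.ker (E p) := listSpan_le.2 h
  exact this hx

namespace IsUnitriangular

theorem nil : IsUnitriangular E [] := ⟨by simp, List.Pairwise.nil⟩

theorem head (h : IsUnitriangular E (a :: l)) : E a a = 1 := h.one a List.mem_cons_self

theorem tail (h : IsUnitriangular E (a :: l)) : IsUnitriangular E l :=
  ⟨fun b hb => h.one b (List.mem_cons_of_mem a hb), (List.pairwise_cons.1 h.pairwise).2⟩

theorem form_head (h : IsUnitriangular E (a :: l)) (hx : x ∈ listSpan l) : E x a = 0 :=
  form_eq_zero_left (List.pairwise_cons.1 h.pairwise).1 hx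

theorem concat_iff :
    IsUnitriangular E (l ++ [p]) ↔ IsUnitriangular E l ∧ E p p = 1 ∧ ∀ a ∈ l, E p a = 0 := by
  constructor
  · intro h
    have hp := h.pairwise
    simp only [List.pairwise_append, List.mem_singleton, forall_eq] at hp
    exact ⟨⟨fun a ha => h.one a (by simp [ha]), hp.1⟩, h.one p (by simp), hp.2.2⟩
  · rintro ⟨h, hp, hl⟩
    refine ⟨fun a ha => ?_, by simpa [List.pairwise_append] using ⟨h.pairwise, hl⟩⟩
    rcases List.mem_append.1 ha with ha | ha
    exacts [h.one a ha, List.mem_singleton.1 ha ▸ hp]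

theorem last (h : IsUnitriangular E (l ++ [p])) : E p p = 1 := (concat_iff.1 h).2.1

theorem init (h : IsUnitriangular E (l ++ [p])) : IsUnitriangular E l := (concat_iff.1 h).1

theorem form_last (h : IsUnitriangular E (l ++ [p])) (hx : x ∈ listSpan l) : E p x = 0 :=
  form_eq_zero_right (concat_iff.1 h).2.2 hx

theorem mem_listCone_cons_iff (h : IsUnitriangular E (a :: l)) :
    x ∈ listCone (a :: l) ↔ 0 ≤ E x a ∧ x - E x a • a ∈ listCone l := by
  refine ⟨fun hx => ?_, fun ⟨h0, hx⟩ => mem_listCone_cons.2 ⟨_, h0, _, hx, by abel⟩⟩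
  obtain ⟨c, hc, y, hy, rfl⟩ := mem_listCone_cons.1 hx
  have hya := h.form_head (mem_listSpan_of_mem_listCone hy)
  simpa [h.head, hya] using ⟨hc, hy⟩

theorem mem_listCone_concat_iff (h : IsUnitriangular E (l ++ [p])) :
    x ∈ listCone (l ++ [p]) ↔ 0 ≤ E p x ∧ x - E p x • p ∈ listCone l := by
  rw [listCone_perm (List.perm_append_singleton p l)]
  refine ⟨fun hx => ?_, fun ⟨h0, hx⟩ => mem_listCone_cons.2 ⟨_, h0, _, hx, by abel⟩⟩
  obtain ⟨c, hc, y, hy, rfl⟩ := mem_listCone_cons.1 hx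
  have hpy := h.form_last (mem_listSpan_of_mem_listCone hy)
  simpa [h.last, hpy] using ⟨hc, hy⟩

theorem mem_listSpan_concat_iff (h : IsUnitriangular E (l ++ [p])) :
    x ∈ listSpan (l ++ [p]) ↔ x - E p x • p ∈ listSpan l := by
  rw [listSpan_perm (List.perm_append_singleton p l)]
  refine ⟨fun hx => ?_, fun hx => mem_listSpan_cons.2 ⟨_, _, hx, by abel⟩⟩
  obtain ⟨c, y, hy, rfl⟩ := mem_listSpan_cons.1 hx
  simpa [h.last, h.form_last hy] using hy

theorem mem_listSpan_init_iff (h : IsUnitriangular E (l ++ [p])) :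
    x ∈ listSpan l ↔ x ∈ listSpan (l ++ [p]) ∧ E p x = 0 :=
  ⟨fun hx => ⟨listSpan_mono (List.subset_append_left _ _) hx, h.form_last hx⟩,
    fun ⟨hx, h0⟩ => by simpa [h0] using h.mem_listSpan_concat_iff.1 hx⟩

theorem mem_listCone_init (h : IsUnitriangular E (l ++ [p])) (hx : x ∈ listCone (l ++ [p]))
    (h0 : E p x = 0) : x ∈ listCone l := by
  simpa [h0] using (h.mem_listCone_concat_iff.1 hx).2

theorem eq_zero_of_mem_of_neg_mem (h : IsUnitriangular E l) (hx : x ∈ listCone l)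
    (hx' : -x ∈ listCone l) : x = 0 := by
  induction l with
  | nil => exact mem_listCone_nil.1 hx
  | cons a l ih =>
    rw [h.mem_listCone_cons_iff, map_neg, LinearMap.neg_apply] at hx'
    rw [h.mem_listCone_cons_iff] at hx
    have h0 : E x a = 0 := by linarith [hx.1, hx'.1]
    rw [h0, zero_smul, sub_zero] at hx
    rw [h0, neg_zero, zero_smul, sub_zero] at hx'
    exact ih h.tail hx.2 hx'.2

/-- The members of a unitriangular list span extremal rays of its cone. -/
theorem exists_eq_nonneg_smul (h : IsUnitriangular E l) (ha : a ∈ l) {c : ℝ}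
    (hx : x ∈ listCone l) (hy : y ∈ listCone l) (hxy : x + y = c • a) :
    ∃ d : ℝ, 0 ≤ d ∧ x = d • a := by
  induction l with
  | nil => simp at ha
  | cons b l ih =>
    rw [h.mem_listCone_cons_iff] at hx hy
    have hsum : E x b + E y b = c * E a b := by simpa using congrArg (fun v => E v b) hxy
    rcases List.mem_cons.1 ha with rfl | ha
    · rw [h.head, mul_one] at hsum
      have hneg : y - E y a • a = -(x - E x a • a) := by
        rw [← hsum] at hxy
        linear_combination (norm := module) hxy
      exact ⟨_, hx.1, sub_eq_zero.1 (h.tail.eq_zero_of_mem_of_neg_mem hx.2 (hneg ▸ hy.2))⟩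
    · rw [h.form_head (mem_listSpan ha), mul_zero] at hsum
      have hxb : E x b = 0 := by linarith [hx.1, hy.1]
      have hyb : E y b = 0 := by linarith [hx.1, hy.1]
      rw [hxb, zero_smul, sub_zero] at hx
      rw [hyb, zero_smul, sub_zero] at hy
      exact ih h.tail ha hx.2 hy.2

theorem mem_of_mem_listCone (hl : IsUnitriangular E l) (ha : a ∈ l) (h1 : ∀ b ∈ l', E b b = 1)
    (hl' : ∀ b ∈ l', b ∈ listCone l) {c : ℝ} (hc : 0 < c) (hca : c • a ∈ listCone l') :
    a ∈ l' := by
  induction l' generalizing c with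
  | nil =>
    rw [mem_listCone_nil, smul_eq_zero_iff_right hc.ne'] at hca
    simpa [hca] using hl.one a ha
  | cons b l' ih =>
    simp only [List.forall_mem_cons] at h1 hl'
    obtain ⟨d, hd, y, hy, hcd⟩ := mem_listCone_cons.1 hca
    have hyl : y ∈ listCone l := listCone_le.2 hl'.2 hy
    obtain ⟨q, hq, hyq⟩ := hl.exists_eq_nonneg_smul ha hyl
      (PointedCone.smul_mem _ hd hl'.1) ((add_comm _ _).trans hcd.symm)
    rcases hq.eq_or_lt with rfl | hq
    · have hab : a = (c⁻¹ * d) • b := by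
        rw [zero_smul] at hyq
        rw [mul_smul, eq_inv_smul_iff₀ hc.ne', hcd, hyq, add_zero]
      rw [eq_of_eq_nonneg_smul (hl.one a ha) h1.1 (by positivity) hab]
      exact List.mem_cons_self
    · exact List.mem_cons_of_mem b (ih h1.2 hl'.2 hq (hyq ▸ hy))

end IsUnitriangular

/-! ### Simple systems and their rotation -/

/-- The product, in order, of the reflections in the members of a list. -/
def reflectionProd (E : LinearMap.BilinForm ℝ V) (l : List V) : Module.End ℝ V :=
  (l.map (formReflection E)).prod

/-- `Φ` is a set of roots for the symmetrisation of the positive definite (usually not symmetric)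
form `E`: unit vectors permuted by the reflections in them, these reflections generating only
elements of finite order. -/
structure IsRootSystem (E : LinearMap.BilinForm ℝ V) (Φ : Set V) : Prop where
  pos : ∀ x, x ≠ 0 → 0 < E x x
  one : ∀ a ∈ Φ, E a a = 1
  formReflection_mem : ∀ a ∈ Φ, ∀ b ∈ Φ, formReflection E a b ∈ Φ
  isOfFinOrder : ∀ l : List V, (∀ a ∈ l, a ∈ Φ) → IsOfFinOrder (reflectionProd E l)

/-- A unitriangular list of roots which is a simple system for the roots in its span. The product
of its reflections is a Coxeter element of the parabolic subgroup attached to that span. -/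
structure IsSimpleSystem (E : LinearMap.BilinForm ℝ V) (Φ : Set V) (l : List V) : Prop
    extends IsUnitriangular E l where
  mem : ∀ a ∈ l, a ∈ Φ
  sign : ∀ φ ∈ Φ, φ ∈ listSpan l → φ ∈ listCone l ∨ -φ ∈ listCone l

/-- `l₁` is a simple system for a subspace of the span of `l`, and the roots there which are
positive for `l` are positive for `l₁`. -/
structure IsSubsystem (E : LinearMap.BilinForm ℝ V) (Φ : Set V) (l l₁ : List V) : Prop
    extends IsSimpleSystem E Φ l₁ where
  span_le : listSpan l₁ ≤ listSpan l
  pos : ∀ φ ∈ Φ, φ ∈ listSpan l₁ → φ ∈ listCone l → φ ∈ listCone l₁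

/-- The simple system `l` with first member `a` is replaced by its image under the reflection in
`a`, and `-a` is moved to the end. The product of the reflections does not change. -/
def listRotate (E : LinearMap.BilinForm ℝ V) : List V → List V
  | [] => []
  | a :: l => (l ++ [a]).map (formReflection E a)

variable {Φ : Set V} {l₁ l₂ t : List V}

theorem IsRootSystem.neg_mem (H : IsRootSystem E Φ) (ha : a ∈ Φ) : -a ∈ Φ :=
  formReflection_self (H.one a ha) ▸ H.formReflection_mem a ha a ha

theorem IsRootSystem.ne_zero (H : IsRootSystem E Φ) (ha : a ∈ Φ) : a ≠ 0 := by
  rintro rfl; simpa using H.one 0 ha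

theorem listRotate_cons (ha : E a a = 1) :
    listRotate E (a :: l) = l.map (formReflection E a) ++ [-a] := by
  simp [listRotate, formReflection_self ha]

theorem length_listRotate (l : List V) : (listRotate E l).length = l.length := by
  cases l <;> simp [listRotate]

theorem listRotate_perm (a : V) (l : List V) :
    (listRotate E (a :: l)).Perm ((a :: l).map (formReflection E a)) :=
  (List.perm_append_singleton a l).map _

theorem mem_listCone_listRotate (ha : E a a = 1) :
    x ∈ listCone (listRotate E (a :: l)) ↔ formReflection E a x ∈ listCone (a :: l) := by
  rw [listCone_perm (listRotate_perm a l)]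
  refine ⟨fun h => ?_, fun h => ?_⟩
  · have := map_mem_listCone (formReflection E a) h
    rwa [List.map_map, ← Module.End.coe_mul, formReflection_mul_self ha, Module.End.coe_one,
      List.map_id] at this
  · simpa only [formReflection_formReflection ha] using map_mem_listCone (formReflection E a) h

theorem listSpan_map_formReflection (ha : E a a = 1) (hal : a ∈ l) :
    listSpan (l.map (formReflection E a)) = listSpan l := by
  have hle : ∀ b ∈ l.map (formReflection E a), b ∈ listSpan l := by
    rintro _ hb
    obtain ⟨c, hc, rfl⟩ := List.mem_map.1 hb
    exact formReflection_mem (mem_listSpan hal) (mem_listSpan hc)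
  have ha' : a ∈ listSpan (l.map (formReflection E a)) := by
    rw [← neg_mem_iff, ← formReflection_self ha]
    exact mem_listSpan (List.mem_map_of_mem hal)
  refine (listSpan_le.2 hle).antisymm (listSpan_le.2 fun b hb => ?_)
  rw [← formReflection_formReflection ha b]
  exact formReflection_mem ha' (mem_listSpan (List.mem_map_of_mem hb))

namespace IsUnitriangular

theorem listSpan_listRotate (h : IsUnitriangular E l) :
    listSpan (listRotate E l) = listSpan l := by
  cases l with
  | nil => rfl
  | cons a l =>
    rw [listSpan_perm (listRotate_perm a l),
      listSpan_map_formReflection h.head List.mem_cons_self]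

theorem rotate (h : IsUnitriangular E l) : IsUnitriangular E (listRotate E l) := by
  cases l with
  | nil => exact h
  | cons a l =>
    have hperp : ∀ b ∈ l, E b a = 0 := fun b hb => h.form_head (mem_listSpan hb)
    rw [listRotate_cons h.head]
    refine concat_iff.2 ⟨⟨?_, ?_⟩, by simp [h.head], ?_⟩
    · rw [List.forall_mem_map]
      exact fun b hb => (form_formReflection_self h.head b).trans (h.tail.one b hb)
    · exact List.pairwise_map.2 <| h.tail.pairwise.imp_of_mem fun hb hc hbc =>
        (form_formReflection_of_perp h.head (hperp _ hc) (hperp _ hb)).trans hbc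
    · rw [List.forall_mem_map]
      intro b hb
      rw [map_neg, LinearMap.neg_apply, form_formReflection_right h.head, hperp b hb, neg_zero,
        neg_zero]

end IsUnitriangular

namespace IsSimpleSystem

theorem eq_of_add_eq_smul (H : IsRootSystem E Φ) (hl : IsSimpleSystem E Φ l) (ha : a ∈ l)
    (hb : b ∈ Φ) (hbl : b ∈ listCone l) (hy : y ∈ listCone l) {c : ℝ} (h : b + y = c • a) :
    b = a := by
  obtain ⟨d, hd, hbd⟩ := hl.exists_eq_nonneg_smul ha hbl hy h
  exact eq_of_eq_nonneg_smul (H.one b hb) (hl.one a ha) hd hbd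

theorem obtuse (H : IsRootSystem E Φ) (hl : IsSimpleSystem E Φ l) (ha : a ∈ l) (hb : b ∈ l)
    (hab : a ≠ b) : E a b + E b a ≤ 0 := by
  by_contra! hpos
  have hr := H.formReflection_mem a (hl.mem a ha) b (hl.mem b hb)
  rcases hl.sign _ hr (formReflection_mem (mem_listSpan ha) (mem_listSpan hb)) with h | h
  · rw [formReflection_apply] at h
    obtain ⟨d, hd, had⟩ := hl.exists_eq_nonneg_smul hb (c := 1)
      (PointedCone.smul_mem _ hpos.le (mem_listCone ha)) h (by module)
    rw [← eq_inv_smul_iff₀ hpos.ne', smul_smul] at had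
    exact hab (eq_of_eq_nonneg_smul (hl.one a ha) (hl.one b hb) (by positivity) had)
  · rw [formReflection_apply] at h
    exact hab (hl.eq_of_add_eq_smul H ha (hl.mem b hb) (mem_listCone hb) h
      (c := E a b + E b a) (by module)).symm

theorem rotate (H : IsRootSystem E Φ) (hl : IsSimpleSystem E Φ l) :
    IsSimpleSystem E Φ (listRotate E l) := by
  cases l with
  | nil => exact hl
  | cons a l =>
    have haΦ := hl.mem a List.mem_cons_self
    refine ⟨hl.toIsUnitriangular.rotate, fun b hb => ?_, fun φ hφ hs => ?_⟩
    · obtain ⟨c, hc, rfl⟩ := List.mem_map.1 ((listRotate_perm a l).mem_iff.1 hb)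
      exact H.formReflection_mem a haΦ c (hl.mem c hc)
    · rw [hl.listSpan_listRotate] at hs
      rw [mem_listCone_listRotate hl.head, mem_listCone_listRotate hl.head, map_neg]
      exact hl.sign _ (H.formReflection_mem a haΦ φ hφ)
        (formReflection_mem (mem_listSpan List.mem_cons_self) hs)

/-- The first member is the only positive root that rotation makes negative. -/
theorem mem_listCone_listRotate_of_ne (H : IsRootSystem E Φ) (hl : IsSimpleSystem E Φ (a :: l))
    (hb : b ∈ Φ) (hbl : b ∈ listCone (a :: l)) (hne : b ≠ a) :
    b ∈ listCone (listRotate E (a :: l)) := by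
  refine ((hl.rotate H).sign b hb ?_).resolve_right fun h => hne ?_
  · rw [hl.listSpan_listRotate]; exact mem_listSpan_of_mem_listCone hbl
  · rw [mem_listCone_listRotate hl.head, map_neg, formReflection_apply] at h
    exact hl.eq_of_add_eq_smul H List.mem_cons_self hb hbl h (c := E a b + E b a) (by module)

theorem perm (hl : IsSimpleSystem E Φ l) (h : l.Perm l') (hl' : IsUnitriangular E l') :
    IsSimpleSystem E Φ l' where
  toIsUnitriangular := hl'
  mem a ha := hl.mem a (h.mem_iff.2 ha)
  sign := by rw [← listSpan_perm h, ← listCone_perm h]; exact hl.sign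

theorem init (hl : IsSimpleSystem E Φ (l ++ [p])) : IsSimpleSystem E Φ l where
  toIsUnitriangular := hl.toIsUnitriangular.init
  mem a ha := hl.mem a (List.mem_append_left _ ha)
  sign φ hφ hs := by
    have hpφ := hl.form_last hs
    refine (hl.sign φ hφ (listSpan_mono (List.subset_append_left _ _) hs)).imp ?_ ?_
    · exact fun h => hl.mem_listCone_init h hpφ
    · exact fun h => hl.mem_listCone_init h (by rw [map_neg, hpφ, neg_zero])

end IsSimpleSystem

theorem IsUnitriangular.form_nonpos_of_mem_listCone_listRotate (h : IsUnitriangular E (a :: l))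
    (hx : x ∈ listCone (listRotate E (a :: l))) : E a x ≤ 0 := by
  have hr := h.rotate
  rw [listRotate_cons h.head] at hr hx
  simpa using (hr.mem_listCone_concat_iff.1 hx).1

theorem IsUnitriangular.mem_listCone_listRotate_of_form_nonpos (h : IsUnitriangular E (a :: l))
    (hx : x ∈ listCone (a :: l)) (hax : E a x ≤ 0) : x ∈ listCone (listRotate E (a :: l)) := by
  have hr := h.rotate
  rw [listRotate_cons h.head] at hr ⊢
  refine hr.mem_listCone_concat_iff.2 ⟨by simpa using hax, ?_⟩
  have := map_mem_listCone (formReflection E a) (h.mem_listCone_cons_iff.1 hx).2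
  simpa [formReflection_sub_smul h.head] using this

namespace IsSubsystem

theorem self (hl : IsSimpleSystem E Φ l) : IsSubsystem E Φ l l :=
  ⟨hl, le_rfl, fun _ _ _ h => h⟩

theorem trans (h : IsSubsystem E Φ l l₁) (h' : IsSubsystem E Φ l₁ l₂) : IsSubsystem E Φ l l₂ :=
  ⟨h'.toIsSimpleSystem, h'.span_le.trans h.span_le,
    fun φ hφ hs hc => h'.pos φ hφ hs (h.pos φ hφ (h'.span_le hs) hc)⟩

theorem listCone_le (H : IsRootSystem E Φ) (hl : IsSimpleSystem E Φ l)
    (h : IsSubsystem E Φ l l₁) : listCone l₁ ≤ listCone l := by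
  refine DualBraid.listCone_le.2 fun b hb => ?_
  have hbΦ := h.mem b hb
  refine (hl.sign b hbΦ (h.span_le (mem_listSpan hb))).resolve_right fun hneg => ?_
  exact H.ne_zero hbΦ (h.eq_zero_of_mem_of_neg_mem (mem_listCone hb)
    (h.pos _ (H.neg_mem hbΦ) (neg_mem (mem_listSpan hb)) hneg))

theorem perm (h : IsSubsystem E Φ l l₁) (hp : l₁.Perm l₂) (h₂ : IsUnitriangular E l₂) :
    IsSubsystem E Φ l l₂ where
  toIsSimpleSystem := h.toIsSimpleSystem.perm hp h₂
  span_le := listSpan_perm hp ▸ h.span_le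
  pos := by rw [← listSpan_perm hp, ← listCone_perm hp]; exact h.pos

/-- If the first member `a` of `l` lies in the span of a subsystem, it belongs to the subsystem,
and it can be moved to the front by commuting reflections. -/
theorem exists_perm_cons (H : IsRootSystem E Φ) (hl : IsSimpleSystem E Φ (a :: l))
    (h : IsSubsystem E Φ (a :: l) l₁) (ha : a ∈ listSpan l₁) :
    ∃ t, l₁.Perm (a :: t) ∧ IsSubsystem E Φ (a :: l) (a :: t) := by
  have haΦ := hl.mem a List.mem_cons_self
  have hle : ∀ b ∈ l₁, b ∈ listCone (a :: l) := DualBraid.listCone_le.1 (h.listCone_le H hl)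
  have hal : a ∈ l₁ := hl.mem_of_mem_listCone List.mem_cons_self h.one hle one_pos <| by
    rw [one_smul]; exact h.pos a haΦ ha (mem_listCone List.mem_cons_self)
  obtain ⟨s, r, rfl⟩ := List.append_of_mem hal
  refine ⟨s ++ r, List.perm_middle, h.perm List.perm_middle
    ⟨fun b hb => h.one b (List.perm_middle.mem_iff.2 hb), ?_⟩⟩
  obtain ⟨hs, har, hsar⟩ := List.pairwise_append.1 h.pairwise
  rw [List.pairwise_cons] at har ⊢
  refine ⟨fun b hb => ?_, List.pairwise_append.2
    ⟨hs, har.2, fun b hb c hc => hsar b hb c (List.mem_cons_of_mem a hc)⟩⟩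
  rcases List.mem_append.1 hb with hb | hb
  · have hab := hsar b hb a List.mem_cons_self
    rcases eq_or_ne a b with rfl | hne
    · exact hab
    have hobtuse := h.obtuse H (b := b) hal (by simp [hb]) hne
    have hnonneg := (hl.mem_listCone_cons_iff.1 (hle b (by simp [hb]))).1
    linarith
  · exact har.1 b hb

theorem rotate (H : IsRootSystem E Φ) (hl : IsSimpleSystem E Φ (a :: l))
    (h : IsSubsystem E Φ (a :: l) (a :: t)) :
    IsSubsystem E Φ (listRotate E (a :: l)) (listRotate E (a :: t)) where
  toIsSimpleSystem := h.toIsSimpleSystem.rotate H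
  span_le := by rw [hl.listSpan_listRotate, h.listSpan_listRotate]; exact h.span_le
  pos φ hφ hs hp := by
    rw [h.listSpan_listRotate] at hs
    rw [mem_listCone_listRotate hl.head] at hp ⊢
    exact h.pos _ (H.formReflection_mem a (hl.mem a List.mem_cons_self) φ hφ)
      (formReflection_mem (mem_listSpan List.mem_cons_self) hs) hp

theorem listCone_le_listRotate (H : IsRootSystem E Φ) (hl : IsSimpleSystem E Φ (a :: l))
    (h : IsSubsystem E Φ (a :: l) l₁) (ha : a ∉ listSpan l₁) :
    listCone l₁ ≤ listCone (listRotate E (a :: l)) :=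
  DualBraid.listCone_le.2 fun b hb => hl.mem_listCone_listRotate_of_ne H (h.mem b hb)
    (h.listCone_le H hl (mem_listCone hb)) fun hba => ha (hba ▸ mem_listSpan hb)

theorem listRotate_of_notMem (H : IsRootSystem E Φ) (hl : IsSimpleSystem E Φ (a :: l))
    (h : IsSubsystem E Φ (a :: l) l₁) (ha : a ∉ listSpan l₁) :
    IsSubsystem E Φ (listRotate E (a :: l)) l₁ where
  toIsSimpleSystem := h.toIsSimpleSystem
  span_le := hl.listSpan_listRotate ▸ h.span_le
  pos φ hφ hs hp := (h.sign φ hφ hs).resolve_right fun hneg => H.ne_zero hφ <|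
    (hl.rotate H).eq_zero_of_mem_of_neg_mem hp (h.listCone_le_listRotate H hl ha hneg)

/-- A subsystem is rotated along with `l` if the first member of `l` lies in its span, and left
alone otherwise. -/
theorem exists_rotate (H : IsRootSystem E Φ) (hl : IsSimpleSystem E Φ (a :: l))
    (h : IsSubsystem E Φ (a :: l) l₁) :
    ∃ l₂, IsSubsystem E Φ (listRotate E (a :: l)) l₂ ∧ listSpan l₂ = listSpan l₁ ∧
      ∀ x ∈ listCone l₁, E a x ≤ 0 → x ∈ listCone l₂ := by
  by_cases ha : a ∈ listSpan l₁
  · obtain ⟨t, hp, ht⟩ := h.exists_perm_cons H hl ha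
    refine ⟨listRotate E (a :: t), ht.rotate H hl, ?_, fun x hx hax => ?_⟩
    · rw [ht.listSpan_listRotate, listSpan_perm hp]
    · exact ht.mem_listCone_listRotate_of_form_nonpos (listCone_perm hp ▸ hx) hax
  · exact ⟨l₁, h.listRotate_of_notMem H hl ha, rfl, fun x hx _ => hx⟩

theorem init (hl : IsSimpleSystem E Φ (l ++ [p])) : IsSubsystem E Φ (l ++ [p]) l where
  toIsSimpleSystem := hl.init
  span_le := listSpan_mono (List.subset_append_left _ _)
  pos _ _ hs hφ := hl.mem_listCone_init hφ (hl.form_last hs)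

theorem init_init (hl : IsUnitriangular E (l ++ [p])) (h : IsSubsystem E Φ (l ++ [p]) (t ++ [p])) :
    IsSubsystem E Φ l t where
  toIsSimpleSystem := h.toIsSimpleSystem.init
  span_le x hx := by
    obtain ⟨hx', hpx⟩ := h.mem_listSpan_init_iff.1 hx
    exact hl.mem_listSpan_init_iff.2 ⟨h.span_le hx', hpx⟩
  pos φ hφ hs hp := by
    obtain ⟨hs', hpφ⟩ := h.mem_listSpan_init_iff.1 hs
    exact h.mem_listCone_init
      (h.pos φ hφ hs' (listCone_mono (List.subset_append_left _ _) hp)) hpφ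

end IsSubsystem

/-! ### Coxeter transformations -/

theorem reflectionProd_cons (a : V) (l : List V) :
    reflectionProd E (a :: l) = formReflection E a * reflectionProd E l := List.prod_cons

theorem reflectionProd_append (l l' : List V) :
    reflectionProd E (l ++ l') = reflectionProd E l * reflectionProd E l' := by
  simp [reflectionProd]

theorem reflectionProd_singleton (a : V) : reflectionProd E [a] = formReflection E a := by
  simp [reflectionProd]

theorem reflectionProd_map_formReflection (ha : E a a = 1) (l : List V) :
    reflectionProd E (l.map (formReflection E a)) * formReflection E a =
      formReflection E a * reflectionProd E l := by
  induction l with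
  | nil => simp [reflectionProd]
  | cons b l ih =>
    rw [List.map_cons, reflectionProd_cons, reflectionProd_cons, mul_assoc, ih, ← mul_assoc,
      formReflection_map_mul ha, mul_assoc]

theorem reflectionProd_sub_mem (l : List V) (x : V) : reflectionProd E l x - x ∈ listSpan l := by
  induction l with
  | nil => simp [reflectionProd]
  | cons a l ih =>
    have hx : reflectionProd E (a :: l) x - x = (reflectionProd E l x - x) -
        (E a (reflectionProd E l x) + E (reflectionProd E l x) a) • a := by
      rw [reflectionProd_cons, Module.End.mul_apply, formReflection_apply]; abel
    rw [hx]
    exact sub_mem (listSpan_mono (List.subset_cons_self a l) ih)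
      (Submodule.smul_mem _ _ (mem_listSpan List.mem_cons_self))

/-- `w` is the Coxeter transformation which the form `E` determines on the subspace `U`: it moves
vectors by elements of `U`, and the displacement of `y` represents the functional
`x ↦ -(E x y + E y x)` on `U`. If `E` is positive definite there is at most one such `w`. -/
structure IsCoxeterTransformation (E : LinearMap.BilinForm ℝ V) (U : Submodule ℝ V)
    (w : Module.End ℝ V) : Prop where
  sub_mem : ∀ y, w y - y ∈ U
  form_sub : ∀ x ∈ U, ∀ y, E x (w y - y) = -(E x y + E y x)

namespace IsCoxeterTransformation

variable {U : Submodule ℝ V} {w w' : Module.End ℝ V}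

theorem unique (hE : ∀ x, x ≠ 0 → 0 < E x x) (h : IsCoxeterTransformation E U w)
    (h' : IsCoxeterTransformation E U w') : w = w' := by
  ext y
  by_contra hne
  have hU : w y - w' y ∈ U := by simpa using _root_.sub_mem (h.sub_mem y) (h'.sub_mem y)
  have hw := h.form_sub _ hU y
  have hw' := h'.form_sub _ hU y
  have hpos := hE _ (sub_ne_zero.2 hne)
  rw [map_sub] at hw hw' hpos
  linarith

theorem eq_zero_of_fixed (hE : ∀ x, x ≠ 0 → 0 < E x x) (h : IsCoxeterTransformation E U w)
    (hx : x ∈ U) (hwx : w x = x) : x = 0 := by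
  by_contra hne
  have hform := h.form_sub x hx x
  rw [hwx, sub_self, map_zero] at hform
  linarith [hE x hne]

theorem exists_sub_eq [FiniteDimensional ℝ U] (hE : ∀ x, x ≠ 0 → 0 < E x x)
    (h : IsCoxeterTransformation E U w) (hx : x ∈ U) : ∃ y, w y - y = x := by
  let D : U →ₗ[ℝ] U := (w - 1).restrict fun y _ => h.sub_mem y
  have hD : Function.Injective D := by
    refine (injective_iff_map_eq_zero D).2 fun y hy => Subtype.ext ?_
    exact h.eq_zero_of_fixed hE y.2 (sub_eq_zero.1 (congrArg Subtype.val hy))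
  obtain ⟨y, hy⟩ := LinearMap.surjective_of_injective hD ⟨x, hx⟩
  exact ⟨y, congrArg Subtype.val hy⟩

end IsCoxeterTransformation

instance finiteDimensional_listSpan (l : List V) : FiniteDimensional ℝ (listSpan l) :=
  FiniteDimensional.span_of_finite ℝ (List.finite_toSet l)

theorem finrank_listSpan_le (l : List V) : Module.finrank ℝ (listSpan l) ≤ l.length := by
  have h : {x | x ∈ l} = Set.range l.get := by ext x; simp [List.mem_iff_get]
  rw [listSpan, h]
  simpa [Set.finrank] using finrank_range_le_card (R := ℝ) l.get

namespace IsUnitriangular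

theorem reflectionProd_listRotate (h : IsUnitriangular E l) :
    reflectionProd E (listRotate E l) = reflectionProd E l := by
  cases l with
  | nil => rfl
  | cons a l =>
    rw [listRotate_cons h.head, reflectionProd_append, reflectionProd_singleton,
      formReflection_neg, reflectionProd_map_formReflection h.head, reflectionProd_cons]

theorem isCoxeterTransformation (h : IsUnitriangular E l) :
    IsCoxeterTransformation E (listSpan l) (reflectionProd E l) := by
  refine ⟨reflectionProd_sub_mem l, ?_⟩
  induction l with
  | nil => intro x hx y; simp [mem_listSpan_nil.1 hx]
  | cons a l ih =>
    intro x hx y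
    obtain ⟨c, z, hz, rfl⟩ := mem_listSpan_cons.1 hx
    have hform := ih h.tail z hz y
    have hperp := h.form_head (reflectionProd_sub_mem (E := E) l y)
    rw [reflectionProd_cons, Module.End.mul_apply, formReflection_apply]
    simp only [map_add, map_smul, map_sub, LinearMap.add_apply, LinearMap.smul_apply,
      LinearMap.sub_apply, smul_eq_mul, h.head, h.form_head hz] at hform hperp ⊢
    linear_combination hform - c * hperp

theorem reflectionProd_eq (hE : ∀ x, x ≠ 0 → 0 < E x x) (h : IsUnitriangular E l)
    (h' : IsUnitriangular E l') (hs : listSpan l = listSpan l') :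
    reflectionProd E l = reflectionProd E l' :=
  h.isCoxeterTransformation.unique hE (hs ▸ h'.isCoxeterTransformation)

theorem finrank_listSpan (h : IsUnitriangular E l) :
    Module.finrank ℝ (listSpan l) = l.length := by
  refine (finrank_listSpan_le l).antisymm ?_
  induction l with
  | nil => exact Nat.zero_le _
  | cons a l ih =>
    have hlt : listSpan l < listSpan (a :: l) := by
      refine (listSpan_mono (List.subset_cons_self a l)).lt_of_ne fun heq => ?_
      have haa := h.form_head (heq ▸ mem_listSpan List.mem_cons_self)
      exact one_ne_zero (h.head.symm.trans haa)
    exact (ih h.tail).trans_lt (Submodule.finrank_lt_finrank_of_lt hlt)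

theorem length_eq (h : IsUnitriangular E l) (h' : IsUnitriangular E l')
    (hs : listSpan l = listSpan l') : l.length = l'.length := by
  rw [← h.finrank_listSpan, ← h'.finrank_listSpan, hs]

theorem listSpan_le_of_reflectionProd_eq (hE : ∀ x, x ≠ 0 → 0 < E x x) (h : IsUnitriangular E l)
    (heq : reflectionProd E l = reflectionProd E l') : listSpan l ≤ listSpan l' := by
  intro x hx
  obtain ⟨y, rfl⟩ := h.isCoxeterTransformation.exists_sub_eq hE hx
  rw [heq]
  exact reflectionProd_sub_mem l' y

theorem length_le_of_reflectionProd_eq (hE : ∀ x, x ≠ 0 → 0 < E x x) (h : IsUnitriangular E l)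
    (heq : reflectionProd E l = reflectionProd E l') : l.length ≤ l'.length :=
  h.finrank_listSpan ▸ (Submodule.finrank_mono (h.listSpan_le_of_reflectionProd_eq hE heq)).trans
    (finrank_listSpan_le l')

theorem listSpan_eq_of_reflectionProd_eq (hE : ∀ x, x ≠ 0 → 0 < E x x) (h : IsUnitriangular E l)
    (heq : reflectionProd E l = reflectionProd E l') (hlen : l'.length ≤ l.length) :
    listSpan l = listSpan l' :=
  Submodule.eq_of_le_of_finrank_le (h.listSpan_le_of_reflectionProd_eq hE heq)
    (h.finrank_listSpan ▸ (finrank_listSpan_le l').trans hlen)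

end IsUnitriangular

/-! ### Iterated rotation -/

theorem listRotate_iterate_append (l l' : List V) (hl : ∀ a ∈ l, E a a = 1) :
    (listRotate E)^[l.length] (l ++ l') = (l' ++ l).map (reflectionProd E l) := by
  induction hn : l.length generalizing l l' with
  | zero => simp [List.length_eq_zero_iff.1 hn, reflectionProd, Module.End.coe_one]
  | succ n ih =>
    obtain ⟨a, l, rfl⟩ := List.exists_cons_of_length_eq_add_one hn
    have ha := hl a List.mem_cons_self
    have hmap : ∀ s : List V,
        (s.map (formReflection E a)).map (reflectionProd E (l.map (formReflection E a))) =
          s.map (reflectionProd E (a :: l)) := fun s => by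
      rw [List.map_map, reflectionProd_cons, ← reflectionProd_map_formReflection ha]; rfl
    have hrot : listRotate E (a :: l ++ l') =
        l.map (formReflection E a) ++ (l' ++ [a]).map (formReflection E a) := by
      simp [listRotate]
    rw [Function.iterate_succ_apply, hrot, ih _ _ _ (by simpa using hn), ← List.map_append, hmap]
    · simp
    · rw [List.forall_mem_map]
      exact fun b hb => (form_formReflection_self ha b).trans (hl b (List.mem_cons_of_mem a hb))

theorem length_listRotate_iterate (k : ℕ) (l : List V) :
    ((listRotate E)^[k] l).length = l.length := by
  induction k with
  | zero => rfl
  | succ k ih => rw [Function.iterate_succ_apply', length_listRotate, ih]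

namespace IsSimpleSystem

theorem listRotate_iterate (H : IsRootSystem E Φ) (hl : IsSimpleSystem E Φ l) (k : ℕ) :
    IsSimpleSystem E Φ ((listRotate E)^[k] l) := by
  induction k with
  | zero => exact hl
  | succ k ih => rw [Function.iterate_succ_apply']; exact ih.rotate H

theorem listSpan_listRotate_iterate (H : IsRootSystem E Φ) (hl : IsSimpleSystem E Φ l) (k : ℕ) :
    listSpan ((listRotate E)^[k] l) = listSpan l := by
  induction k with
  | zero => rfl
  | succ k ih =>
    rw [Function.iterate_succ_apply', (hl.listRotate_iterate H k).listSpan_listRotate, ih]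

theorem reflectionProd_listRotate_iterate (H : IsRootSystem E Φ) (hl : IsSimpleSystem E Φ l)
    (k : ℕ) : reflectionProd E ((listRotate E)^[k] l) = reflectionProd E l := by
  induction k with
  | zero => rfl
  | succ k ih =>
    rw [Function.iterate_succ_apply', (hl.listRotate_iterate H k).reflectionProd_listRotate, ih]

theorem listRotate_iterate_mul_length (H : IsRootSystem E Φ) (hl : IsSimpleSystem E Φ l) (n : ℕ) :
    (listRotate E)^[n * l.length] l = l.map (reflectionProd E l ^ n) := by
  induction n with
  | zero => simp [Module.End.coe_one]
  | succ n ih =>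
    have hL := hl.listRotate_iterate H (n * l.length)
    have hturn := listRotate_iterate_append _ [] hL.one
    rw [length_listRotate_iterate, hl.reflectionProd_listRotate_iterate H, List.append_nil,
      List.nil_append, ih] at hturn
    rw [add_mul, one_mul, add_comm, Function.iterate_add_apply, ih, hturn, List.map_map, pow_succ']
    rfl

theorem mem_periodicPts_listRotate (H : IsRootSystem E Φ) (hl : IsSimpleSystem E Φ l) :
    l ∈ Function.periodicPts (listRotate E) := by
  rcases l.length.eq_zero_or_pos with h0 | h0
  · rw [List.length_eq_zero_iff.1 h0]
    exact Function.mk_mem_periodicPts one_pos rfl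
  · refine Function.mk_mem_periodicPts (Nat.mul_pos (H.isOfFinOrder l hl.mem).orderOf_pos h0) ?_
    rw [Function.IsPeriodicPt, Function.IsFixedPt, hl.listRotate_iterate_mul_length H,
      pow_orderOf_eq_one]
    exact l.map_id

theorem exists_listRotate_iterate_eq (H : IsRootSystem E Φ) (hl : IsSimpleSystem E Φ l) (k : ℕ) :
    ∃ m, (listRotate E)^[m] ((listRotate E)^[k] l) = l := by
  obtain ⟨n, hn, hper⟩ := hl.mem_periodicPts_listRotate H
  refine ⟨k * n - k, ?_⟩
  rw [← Function.iterate_add_apply, Nat.sub_add_cancel (Nat.le_mul_of_pos_right k hn)]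
  exact hper.const_mul k

/-- The sum over the orbit of `x` under the Coxeter transformation is a fixed vector, hence zero;
so `x` and its translates cannot all lie in the cone of `l`. -/
theorem exists_notMem_listCone (H : IsRootSystem E Φ) (hl : IsSimpleSystem E Φ l) (hx : x ≠ 0) :
    ∃ k, x ∉ listCone ((listRotate E)^[k] l) := by
  by_contra! hall
  set c := reflectionProd E l with hc
  set N := orderOf c
  have hN : 0 < N := (H.isOfFinOrder l hl.mem).orderOf_pos
  have hpow : ∀ m, (c ^ m) x ∈ listCone l := fun m => by
    have h := map_mem_listCone (c ^ m) (hall ((N * m - m) * l.length))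
    rwa [hl.listRotate_iterate_mul_length H, ← hc, List.map_map, ← Module.End.coe_mul, ← pow_add,
      Nat.add_sub_cancel' (Nat.le_mul_of_pos_left m hN), pow_mul, pow_orderOf_eq_one, one_pow,
      Module.End.coe_one, List.map_id] at h
  have hfix : c * ∑ m ∈ Finset.range N, c ^ m = ∑ m ∈ Finset.range N, c ^ m := by
    have h := (geom_sum_succ (x := c) (n := N)).symm.trans (Finset.sum_range_succ _ _)
    rwa [pow_orderOf_eq_one, add_left_inj] at h
  have hsum : ∑ m ∈ Finset.range N, (c ^ m) x = 0 := by
    refine hl.isCoxeterTransformation.eq_zero_of_fixed H.pos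
      (sum_mem fun m _ => mem_listSpan_of_mem_listCone (hpow m)) ?_
    simpa using LinearMap.congr_fun hfix x
  rw [← Finset.add_sum_erase _ _ (Finset.mem_range.2 hN), pow_zero, Module.End.one_apply,
    add_eq_zero_iff_neg_eq] at hsum
  exact hx (hl.eq_zero_of_mem_of_neg_mem (by simpa using hpow 0)
    (hsum ▸ sum_mem fun m _ => hpow m))

theorem exists_listRotate_iterate_eq_cons (H : IsRootSystem E Φ) (hl : IsSimpleSystem E Φ l)
    (hb : b ∈ Φ) (hbl : b ∈ listCone l) : ∃ k t, (listRotate E)^[k] l = b :: t := by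
  obtain ⟨n, hn⟩ := hl.exists_notMem_listCone H (H.ne_zero hb)
  induction n generalizing l with
  | zero => exact absurd hbl hn
  | succ n ih =>
    cases l with
    | nil => exact absurd (mem_listCone_nil.1 hbl) (H.ne_zero hb)
    | cons a l =>
      rcases eq_or_ne b a with rfl | hne
      · exact ⟨0, l, rfl⟩
      · obtain ⟨k, t, h⟩ := ih (hl.rotate H) (hl.mem_listCone_listRotate_of_ne H hb hbl hne) hn
        exact ⟨k + 1, t, h⟩

end IsSimpleSystem

theorem IsSubsystem.exists_listRotate_iterate (H : IsRootSystem E Φ) (hl : IsSimpleSystem E Φ l)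
    (h : IsSubsystem E Φ l l₁) (k : ℕ) :
    ∃ l₂, IsSubsystem E Φ ((listRotate E)^[k] l) l₂ ∧ listSpan l₂ = listSpan l₁ := by
  induction k generalizing l l₁ with
  | zero => exact ⟨l₁, h, rfl⟩
  | succ k ih =>
    cases l with
    | nil => exact ih hl h
    | cons a l =>
      obtain ⟨l₂, h₂, hs₂, -⟩ := h.exists_rotate H hl
      obtain ⟨l₃, h₃, hs₃⟩ := ih (hl.rotate H) h₂
      exact ⟨l₃, h₃, hs₃.trans hs₂⟩

/-! ### Factorisations of a Coxeter transformation -/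

namespace IsSimpleSystem

/-- Rotate `l` until `±b` comes first, move it to the end, drop it, and rotate on until `l`
recurs. -/
theorem exists_perp_subsystem (H : IsRootSystem E Φ) (hl : IsSimpleSystem E Φ l) (hb : b ∈ Φ)
    (hbl : b ∈ listSpan l) :
    ∃ l₁, IsSubsystem E Φ l l₁ ∧ ∀ x, x ∈ listSpan l₁ ↔ x ∈ listSpan l ∧ E b x = 0 := by
  wlog hpos : b ∈ listCone l generalizing b
  · simpa using this (H.neg_mem hb) (neg_mem hbl) ((hl.sign b hb hbl).resolve_left hpos)
  obtain ⟨k, t, hk⟩ := hl.exists_listRotate_iterate_eq_cons H hb hpos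
  obtain ⟨m, hm⟩ := hl.exists_listRotate_iterate_eq H (k + 1)
  have hL := hl.listRotate_iterate H (k + 1)
  have hs := hl.listSpan_listRotate_iterate H (k + 1)
  rw [Function.iterate_succ_apply', hk, listRotate_cons (H.one b hb)] at hL hs hm
  obtain ⟨l₁, h₁, hs₁⟩ := (IsSubsystem.init hL).exists_listRotate_iterate H hL m
  refine ⟨l₁, hm ▸ h₁, fun x => ?_⟩
  rw [hs₁, hL.mem_listSpan_init_iff, hs, map_neg, LinearMap.neg_apply, neg_eq_zero]

/-- A reflection in a root of the span of `l` is a right factor of the product of `l`. -/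
theorem exists_reflectionProd_eq_mul (H : IsRootSystem E Φ) (hl : IsSimpleSystem E Φ l)
    (hb : b ∈ Φ) (hbl : b ∈ listSpan l) :
    ∃ l₁, IsSubsystem E Φ l l₁ ∧ (∀ x ∈ listSpan l, E b x = 0 → x ∈ listSpan l₁) ∧
      l₁.length + 1 = l.length ∧
      reflectionProd E l = reflectionProd E l₁ * formReflection E b := by
  obtain ⟨l₁, h₁, hperp⟩ := hl.exists_perp_subsystem H hb hbl
  have htri : IsUnitriangular E (l₁ ++ [b]) := IsUnitriangular.concat_iff.2
    ⟨h₁.toIsUnitriangular, H.one b hb, fun a ha => ((hperp a).1 (mem_listSpan ha)).2⟩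
  have hs : listSpan l = listSpan (l₁ ++ [b]) := by
    ext x
    rw [htri.mem_listSpan_concat_iff, hperp]
    refine ⟨fun hx => ⟨sub_mem hx (Submodule.smul_mem _ _ hbl), by simp [H.one b hb]⟩, fun hx => ?_⟩
    simpa using add_mem hx.1 (Submodule.smul_mem _ (E b x) hbl)
  refine ⟨l₁, h₁, fun x hx h0 => (hperp x).2 ⟨hx, h0⟩, ?_, ?_⟩
  · rw [hl.length_eq htri hs, List.length_append, List.length_singleton]
  · rw [hl.reflectionProd_eq H.pos htri hs, reflectionProd_append, reflectionProd_singleton]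

theorem exists_reflectionProd_eq_mul_of_isUnitriangular (H : IsRootSystem E Φ)
    (hl : IsSimpleSystem E Φ l) (ht : IsUnitriangular E t) (htΦ : ∀ a ∈ t, a ∈ Φ)
    (htl : ∀ a ∈ t, a ∈ listSpan l) :
    ∃ l₁, IsSubsystem E Φ l l₁ ∧ l₁.length + t.length = l.length ∧
      reflectionProd E l = reflectionProd E l₁ * reflectionProd E t := by
  induction t using List.reverseRecOn generalizing l with
  | nil => exact ⟨l, .self hl, rfl, (mul_one _).symm⟩
  | append_singleton t b ih =>
    simp only [List.forall_mem_append, List.forall_mem_singleton] at htΦ htl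
    obtain ⟨-, -, hbt⟩ := IsUnitriangular.concat_iff.1 ht
    obtain ⟨l₁, h₁, hperp, hlen₁, hprod₁⟩ := hl.exists_reflectionProd_eq_mul H htΦ.2 htl.2
    obtain ⟨l₂, h₂, hlen₂, hprod₂⟩ := ih h₁.toIsSimpleSystem ht.init htΦ.1
      fun a ha => hperp a (htl.1 a ha) (hbt a ha)
    refine ⟨l₂, h₁.trans h₂, ?_, ?_⟩
    · rw [List.length_append, List.length_singleton, ← add_assoc, hlen₂, hlen₁]
    · rw [hprod₁, hprod₂, reflectionProd_append, reflectionProd_singleton, mul_assoc]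

/-- Left factors of the product of a simple system are products of subsystems. -/
theorem exists_subsystem_reflectionProd_eq (H : IsRootSystem E Φ) (hl : IsSimpleSystem E Φ l)
    (ht : ∀ a ∈ t, a ∈ Φ) (hprod : reflectionProd E l = reflectionProd E l' * reflectionProd E t)
    (hlen : l'.length + t.length = l.length) :
    ∃ l₁, IsSubsystem E Φ l l₁ ∧ reflectionProd E l₁ = reflectionProd E l' := by
  induction t using List.reverseRecOn generalizing l with
  | nil => exact ⟨l, .self hl, hprod.trans (mul_one _)⟩
  | append_singleton t b ih =>
    simp only [List.forall_mem_append, List.forall_mem_singleton] at ht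
    rw [← reflectionProd_append] at hprod
    have hs := hl.listSpan_eq_of_reflectionProd_eq H.pos hprod (by simp [← hlen])
    obtain ⟨l₁, h₁, -, hlen₁, hprod₁⟩ :=
      hl.exists_reflectionProd_eq_mul H ht.2 (hs ▸ mem_listSpan (by simp))
    have hcancel : reflectionProd E l₁ = reflectionProd E l' * reflectionProd E t := by
      have h := congrArg (· * formReflection E b) (hprod₁.symm.trans hprod)
      simpa [reflectionProd_append, reflectionProd_singleton, mul_assoc,
        formReflection_mul_self (H.one b ht.2)] using h
    obtain ⟨l₂, h₂, hprod₂⟩ := ih h₁.toIsSimpleSystem ht.1 hcancel (by simp at hlen; omega)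
    exact ⟨l₂, h₁.trans h₂, hprod₂⟩

end IsSimpleSystem

/-! ### Intersections of parabolic subspaces -/

/-- The subspace `U` is spanned by a subsystem of `l` whose cone contains `X`. -/
def IsSubsystemSpan (E : LinearMap.BilinForm ℝ V) (Φ : Set V) (l : List V) (X : Set V)
    (U : Submodule ℝ V) : Prop :=
  ∃ l₁, IsSubsystem E Φ l l₁ ∧ listSpan l₁ = U ∧ ∀ x ∈ X, x ∈ listCone l₁

section Meet

variable {X : Set V} {U U₁ U₂ : Submodule ℝ V}

theorem IsSubsystemSpan.mem_listCone (H : IsRootSystem E Φ) (hl : IsSimpleSystem E Φ l)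
    (h : IsSubsystemSpan E Φ l X U) (hx : x ∈ X) : x ∈ listCone l := by
  obtain ⟨l₁, h₁, -, hX⟩ := h
  exact h₁.listCone_le H hl (hX x hx)

theorem IsSubsystemSpan.form_nonpos (H : IsRootSystem E Φ) (hl : IsSimpleSystem E Φ (a :: l))
    (h : IsSubsystemSpan E Φ (a :: l) X U) (ha : a ∉ U) (hx : x ∈ X) : E a x ≤ 0 := by
  obtain ⟨l₁, h₁, rfl, hX⟩ := h
  exact hl.form_nonpos_of_mem_listCone_listRotate (h₁.listCone_le_listRotate H hl ha (hX x hx))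

theorem IsSubsystemSpan.rotate (H : IsRootSystem E Φ) (hl : IsSimpleSystem E Φ (a :: l))
    (h : IsSubsystemSpan E Φ (a :: l) X U) (ha : ∀ x ∈ X, E a x ≤ 0) :
    IsSubsystemSpan E Φ (listRotate E (a :: l)) X U := by
  obtain ⟨l₁, h₁, hs₁, hX⟩ := h
  obtain ⟨l₂, h₂, hs₂, hcone⟩ := h₁.exists_rotate H hl
  exact ⟨l₂, h₂, hs₂.trans hs₁, fun x hx => hcone x (hX x hx) (ha x hx)⟩

/-- If the first member `a` of `l` belongs to `U`, it can be removed after rotating. -/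
theorem IsSubsystemSpan.descend (H : IsRootSystem E Φ) (hl : IsSimpleSystem E Φ (a :: l))
    (h : IsSubsystemSpan E Φ (a :: l) X U) (ha : a ∈ U) :
    ∃ U' ≤ U, (∀ b ∈ U', E a b = 0) ∧
      IsSubsystemSpan E Φ (l.map (formReflection E a)) ((fun x => x - E a x • a) '' X) U' := by
  obtain ⟨l₁, h₁, rfl, hX⟩ := h
  obtain ⟨t, hp, ht⟩ := h₁.exists_perm_cons H hl ha
  have hr := ht.rotate H hl
  have htri := hl.toIsUnitriangular.rotate
  simp only [listRotate_cons hl.head] at hr htri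
  refine ⟨_, ?_, fun b hb => by simpa using hr.form_last hb, _, hr.init_init htri, rfl, ?_⟩
  · rw [listSpan_perm hp, ← ht.listSpan_listRotate, listRotate_cons hl.head]
    exact listSpan_mono (List.subset_append_left _ _)
  · rintro _ ⟨x, hx, rfl⟩
    simp only [← formReflection_sub_smul ht.head]
    exact map_mem_listCone _ (ht.mem_listCone_cons_iff.1 (listCone_perm hp ▸ hX x hx)).2

/-- Rotation of `l` goes on until its first member lies in both subspaces; this happens because
`x` eventually leaves the cone of `l`. -/
theorem exists_rotate_head_mem (H : IsRootSystem E Φ) (hl : IsSimpleSystem E Φ l)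
    (h₁ : IsSubsystemSpan E Φ l X U₁) (h₂ : IsSubsystemSpan E Φ l X U₂) (hx : x ∈ X)
    (hx0 : x ≠ 0) :
    ∃ a s, s.length + 1 = l.length ∧ IsSimpleSystem E Φ (a :: s) ∧ a ∈ U₁ ⊓ U₂ ∧
      IsSubsystemSpan E Φ (a :: s) X U₁ ∧ IsSubsystemSpan E Φ (a :: s) X U₂ := by
  obtain ⟨k, hk⟩ := hl.exists_notMem_listCone H hx0
  induction k generalizing l with
  | zero => exact absurd (h₁.mem_listCone H hl hx) hk
  | succ k ih =>
    cases l with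
    | nil => exact absurd (mem_listCone_nil.1 (h₁.mem_listCone H hl hx)) hx0
    | cons a l =>
      by_cases ha : a ∈ U₁ ⊓ U₂
      · exact ⟨a, l, rfl, hl, ha, h₁, h₂⟩
      · have hX : ∀ y ∈ X, E a y ≤ 0 := fun y hy => (not_and_or.1 ha).elim
          (fun ha => h₁.form_nonpos H hl ha hy) (fun ha => h₂.form_nonpos H hl ha hy)
        obtain ⟨b, s, hlen, hs⟩ := ih (hl.rotate H) (h₁.rotate H hl hX) (h₂.rotate H hl hX) hk
        exact ⟨b, s, hlen.trans (length_listRotate _), hs⟩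

theorem exists_isUnitriangular_of_isSubsystemSpan (H : IsRootSystem E Φ)
    (hl : IsSimpleSystem E Φ l) (h₁ : IsSubsystemSpan E Φ l X U₁)
    (h₂ : IsSubsystemSpan E Φ l X U₂) :
    ∃ t, IsUnitriangular E t ∧ (∀ a ∈ t, a ∈ Φ ∧ a ∈ U₁ ⊓ U₂) ∧ ∀ x ∈ X, x ∈ listSpan t := by
  induction hn : l.length generalizing l X U₁ U₂ with
  | zero =>
    obtain rfl := List.length_eq_zero_iff.1 hn
    refine ⟨[], .nil, by simp, fun x hx => ?_⟩
    exact mem_listSpan_of_mem_listCone (h₁.mem_listCone H hl hx)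
  | succ n ih =>
    by_cases hX : ∀ x ∈ X, x = 0
    · exact ⟨[], .nil, by simp, fun x hx => mem_listSpan_nil.2 (hX x hx)⟩
    push Not at hX
    obtain ⟨x, hx, hx0⟩ := hX
    obtain ⟨a, s, hlen, hs, ha, h₁, h₂⟩ := exists_rotate_head_mem H hl h₁ h₂ hx hx0
    obtain ⟨U₁', hle₁, hperp, h₁'⟩ := h₁.descend H hs ha.1
    obtain ⟨U₂', hle₂, -, h₂'⟩ := h₂.descend H hs ha.2
    have hs' := hs.rotate H
    rw [listRotate_cons hs.head] at hs'
    obtain ⟨t, ht, htU, htX⟩ := ih hs'.init h₁' h₂' (by simp; omega)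
    have hta : IsUnitriangular E (t ++ [a]) :=
      IsUnitriangular.concat_iff.2 ⟨ht, hs.head, fun b hb => hperp b (htU b hb).2.1⟩
    refine ⟨t ++ [a], hta, List.forall_mem_append.2 ⟨fun b hb => ?_, ?_⟩, fun y hy => ?_⟩
    · exact ⟨(htU b hb).1, hle₁ (htU b hb).2.1, hle₂ (htU b hb).2.2⟩
    · exact List.forall_mem_singleton.2 ⟨hs.mem a List.mem_cons_self, ha⟩
    · exact hta.mem_listSpan_concat_iff.2 (htX _ ⟨y, hy, rfl⟩)

/-- The spans of two subsystems have a meet: a unitriangular list of common roots spanning all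
their common roots. -/
theorem IsSubsystem.exists_meet (H : IsRootSystem E Φ) (hl : IsSimpleSystem E Φ l)
    (h₁ : IsSubsystem E Φ l l₁) (h₂ : IsSubsystem E Φ l l₂) :
    ∃ t, IsUnitriangular E t ∧ (∀ a ∈ t, a ∈ Φ ∧ a ∈ listSpan l₁ ⊓ listSpan l₂) ∧
      ∀ a ∈ Φ, a ∈ listSpan l₁ ⊓ listSpan l₂ → a ∈ listSpan t := by
  let X : Set V := {a | a ∈ Φ ∧ a ∈ listSpan l₁ ⊓ listSpan l₂ ∧ a ∈ listCone l}
  obtain ⟨t, ht, htU, htX⟩ := exists_isUnitriangular_of_isSubsystemSpan (X := X) H hl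
    ⟨l₁, h₁, rfl, fun a ha => h₁.pos a ha.1 ha.2.1.1 ha.2.2⟩
    ⟨l₂, h₂, rfl, fun a ha => h₂.pos a ha.1 ha.2.1.2 ha.2.2⟩
  refine ⟨t, ht, htU, fun a haΦ ha => ?_⟩
  rcases hl.sign a haΦ (h₁.span_le ha.1) with h | h
  · exact htX a ⟨haΦ, ha, h⟩
  · exact neg_mem_iff.1 (htX (-a) ⟨H.neg_mem haΦ, neg_mem ha, h⟩)

end Meet

end Form

/-! ### Reflection length and the reflection order -/

section Order

variable (cs : CoxeterSystem M W)

theorem rlen_prod_le {l : List W} (hl : ∀ t ∈ l, cs.IsReflection t) :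
    rlen cs l.prod ≤ l.length := Nat.sInf_le ⟨l, hl, rfl, rfl⟩

theorem exists_length_eq_rlen (w : W) :
    ∃ l : List W, (∀ t ∈ l, cs.IsReflection t) ∧ l.length = rlen cs w ∧ l.prod = w := by
  have hne : {k | ∃ l : List W, (∀ t ∈ l, cs.IsReflection t) ∧ l.length = k ∧
      l.prod = w}.Nonempty := by
    obtain ⟨ω, hω⟩ := cs.wordProd_surjective w
    refine ⟨_, ω.map cs.simple, fun t ht => ?_, rfl, hω⟩
    obtain ⟨i, -, rfl⟩ := List.mem_map.1 ht
    exact cs.isReflection_simple i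
  exact Nat.sInf_mem hne

theorem rlen_one : rlen cs 1 = 0 :=
  Nat.le_zero.1 (rlen_prod_le cs (l := []) (by simp))

theorem eq_one_of_rlen_eq_zero {w : W} (h : rlen cs w = 0) : w = 1 := by
  obtain ⟨l, -, hlen, rfl⟩ := exists_length_eq_rlen cs w
  rw [h, List.length_eq_zero_iff] at hlen
  rw [hlen, List.prod_nil]

theorem rlen_mul_le (a b : W) : rlen cs (a * b) ≤ rlen cs a + rlen cs b := by
  obtain ⟨l, hl, hla, ha⟩ := exists_length_eq_rlen cs a
  obtain ⟨k, hk, hkb, hb⟩ := exists_length_eq_rlen cs b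
  have h := rlen_prod_le cs (List.forall_mem_append.2 ⟨hl, hk⟩)
  rwa [List.prod_append, List.length_append, ha, hb, hla, hkb] at h

theorem rlen_inv_le (a : W) : rlen cs a⁻¹ ≤ rlen cs a := by
  obtain ⟨l, hl, hla, ha⟩ := exists_length_eq_rlen cs a
  have h := rlen_prod_le cs (l := (l.map (·⁻¹)).reverse) fun t ht => by
    obtain ⟨s, hs, rfl⟩ := List.mem_map.1 (List.mem_reverse.1 ht)
    exact (hl s hs).isReflection_inv
  rwa [← List.prod_inv_reverse, ha, List.length_reverse, List.length_map, hla] at h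

theorem rlen_inv (a : W) : rlen cs a⁻¹ = rlen cs a :=
  (rlen_inv_le cs a).antisymm (by simpa using rlen_inv_le cs a⁻¹)

theorem rlen_conj_le (w a : W) : rlen cs (w * a * w⁻¹) ≤ rlen cs a := by
  obtain ⟨l, hl, hla, ha⟩ := exists_length_eq_rlen cs a
  have h := rlen_prod_le cs (l := l.map (MulAut.conj w)) fun t ht => by
    obtain ⟨s, hs, rfl⟩ := List.mem_map.1 ht
    exact (hl s hs).conj w
  rwa [List.prod_hom, ha, List.length_map, hla, MulAut.conj_apply] at h

theorem rlen_mul_comm_le (a b : W) : rlen cs (a * b) ≤ rlen cs (b * a) := by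
  simpa [mul_assoc] using rlen_conj_le cs a (b * a)

theorem rlen_mul_comm (a b : W) : rlen cs (a * b) = rlen cs (b * a) :=
  (rlen_mul_comm_le cs a b).antisymm (rlen_mul_comm_le cs b a)

variable {cs} {a b c : W}

theorem one_rle (a : W) : rle cs 1 a := by simp [rle, rlen_one]

theorem rle_of_le (h : rlen cs a + rlen cs (a⁻¹ * b) ≤ rlen cs b) : rle cs a b := by
  have hmul := rlen_mul_le cs a (a⁻¹ * b)
  rw [mul_inv_cancel_left] at hmul
  exact hmul.antisymm h

theorem rle_trans (hab : rle cs a b) (hbc : rle cs b c) : rle cs a c := by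
  apply rle_of_le
  have hmul := rlen_mul_le cs (a⁻¹ * b) (b⁻¹ * c)
  rw [show a⁻¹ * b * (b⁻¹ * c) = a⁻¹ * c by group] at hmul
  unfold rle at hab hbc
  omega

theorem rle_antisymm (hab : rle cs a b) (hba : rle cs b a) : a = b := by
  unfold rle at hab hba
  exact inv_mul_eq_one.1 (eq_one_of_rlen_eq_zero cs (by omega))

theorem rle_inv_mul (hab : rle cs a b) (hbc : rle cs b c) : rle cs (a⁻¹ * b) (a⁻¹ * c) := by
  have hac := rle_trans hab hbc
  unfold rle at hab hbc hac ⊢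
  rw [show (a⁻¹ * b)⁻¹ * (a⁻¹ * c) = b⁻¹ * c by group]
  omega

/-- Right factors of a minimal factorisation are left factors of another one, as conjugation
preserves the reflection length. -/
theorem inv_mul_rle (h : rle cs a b) : rle cs (a⁻¹ * b) b := by
  unfold rle at h ⊢
  rw [show (a⁻¹ * b)⁻¹ * b = b⁻¹ * (a * b) by group, rlen_mul_comm cs b⁻¹, mul_inv_cancel_right]
  omega

theorem mul_rle (ha : rle cs a c) (hb : rle cs b (a⁻¹ * c)) : rle cs (a * b) c := by
  apply rle_of_le
  have hmul := rlen_mul_le cs a b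
  unfold rle at ha hb
  rw [show (a * b)⁻¹ * c = b⁻¹ * (a⁻¹ * c) by group]
  omega

theorem rle_mul_right (ha : rle cs a c) (hb : rle cs b (a⁻¹ * c)) : rle cs a (a * b) := by
  apply rle_of_le
  have hmul := rlen_mul_le cs (a * b) ((a * b)⁻¹ * c)
  unfold rle at ha hb
  rw [mul_inv_cancel_left, show (a * b)⁻¹ * c = b⁻¹ * (a⁻¹ * c) by group] at hmul
  rw [inv_mul_cancel_left]
  omega

theorem mul_rle_mul_left (hac : rle cs a (a * c)) (hbc : rle cs b c) : rle cs (a * b) (a * c) :=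
  mul_rle hac (by rwa [inv_mul_cancel_left])

theorem inv_rle_inv (h : rle cs a b) : rle cs a⁻¹ b⁻¹ := by
  unfold rle at h ⊢
  rw [show a⁻¹⁻¹ * b⁻¹ = (b * a⁻¹)⁻¹ by group, rlen_inv, rlen_inv, rlen_inv, rlen_mul_comm, h]

end Order

/-! ### Representations by reflections -/

/-- `ρ` is a faithful representation of `W` carrying the reflections of `W` onto the reflections
in the roots of `Φ`. -/
structure IsReflectionRep {V : Type*} [AddCommGroup V] [Module ℝ V] (cs : CoxeterSystem M W)
    (ρ : W →* Module.End ℝ V) (E : LinearMap.BilinForm ℝ V) (Φ : Set V) : Prop where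
  injective : Function.Injective ρ
  exists_root : ∀ t, cs.IsReflection t → ∃ a ∈ Φ, ρ t = formReflection E a
  exists_isReflection : ∀ a ∈ Φ, ∃ t, cs.IsReflection t ∧ ρ t = formReflection E a

namespace IsReflectionRep

variable {V : Type*} [AddCommGroup V] [Module ℝ V] {E : LinearMap.BilinForm ℝ V} {Φ : Set V}
  {l t : List V} {cs : CoxeterSystem M W} {ρ : W →* Module.End ℝ V} {γ u v w z : W}

theorem exists_reflectionProd_eq (R : IsReflectionRep cs ρ E Φ) (w : W) :
    ∃ t : List V, (∀ a ∈ t, a ∈ Φ) ∧ t.length = rlen cs w ∧ reflectionProd E t = ρ w := by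
  obtain ⟨l, hl, hlen, rfl⟩ := exists_length_eq_rlen cs w
  rw [← hlen]
  clear hlen
  induction l with
  | nil => exact ⟨[], by simp, rfl, by simp [reflectionProd]⟩
  | cons s l ih =>
    rw [List.forall_mem_cons] at hl
    obtain ⟨t, ht, hlen, hprod⟩ := ih hl.2
    obtain ⟨a, ha, hs⟩ := R.exists_root s hl.1
    exact ⟨a :: t, List.forall_mem_cons.2 ⟨ha, ht⟩, by simp [hlen], by
      rw [List.prod_cons, map_mul, hs, reflectionProd_cons, hprod]⟩

theorem exists_map_eq (R : IsReflectionRep cs ρ E Φ) (ht : ∀ a ∈ t, a ∈ Φ) :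
    ∃ w, ρ w = reflectionProd E t ∧ rlen cs w ≤ t.length := by
  suffices ∃ l : List W, (∀ s ∈ l, cs.IsReflection s) ∧ ρ l.prod = reflectionProd E t ∧
      l.length = t.length by
    obtain ⟨l, hl, hprod, hlen⟩ := this
    exact ⟨l.prod, hprod, hlen ▸ rlen_prod_le cs hl⟩
  induction t with
  | nil => exact ⟨[], by simp, by simp [reflectionProd], rfl⟩
  | cons a t ih =>
    rw [List.forall_mem_cons] at ht
    obtain ⟨l, hl, hprod, hlen⟩ := ih ht.2
    obtain ⟨s, hs, ha⟩ := R.exists_isReflection a ht.1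
    exact ⟨s :: l, List.forall_mem_cons.2 ⟨hs, hl⟩, by
      rw [List.prod_cons, map_mul, ha, reflectionProd_cons, hprod], by simp [hlen]⟩

theorem isOfFinOrder [Finite W] (R : IsReflectionRep cs ρ E Φ) (ht : ∀ a ∈ t, a ∈ Φ) :
    IsOfFinOrder (reflectionProd E t) := by
  obtain ⟨w, hw, -⟩ := R.exists_map_eq ht
  exact hw ▸ ρ.isOfFinOrder (isOfFinOrder_of_finite w)

theorem rlen_eq_length (R : IsReflectionRep cs ρ E Φ) (H : IsRootSystem E Φ)
    (ht : IsUnitriangular E t) (htΦ : ∀ a ∈ t, a ∈ Φ) (hw : ρ w = reflectionProd E t) :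
    rlen cs w = t.length := by
  obtain ⟨w', hw', hle⟩ := R.exists_map_eq htΦ
  obtain rfl : w' = w := R.injective (hw'.trans hw.symm)
  obtain ⟨t', -, hlen, ht'⟩ := R.exists_reflectionProd_eq w'
  exact hle.antisymm (hlen ▸ ht.length_le_of_reflectionProd_eq H.pos (hw.symm.trans ht'.symm))

theorem rle_of_listSpan_le (R : IsReflectionRep cs ρ E Φ) (H : IsRootSystem E Φ)
    (ht : IsUnitriangular E t) (htΦ : ∀ a ∈ t, a ∈ Φ) (hz : ρ z = reflectionProd E t)
    (hl : IsSimpleSystem E Φ l) (hw : ρ w = reflectionProd E l) (hs : listSpan t ≤ listSpan l) :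
    rle cs z w := by
  obtain ⟨k, hk, hlen, hprod⟩ :=
    hl.exists_reflectionProd_eq_mul_of_isUnitriangular H ht htΦ (listSpan_le.1 hs)
  obtain ⟨y, hy, hle⟩ := R.exists_map_eq hk.mem
  have hwyz : w = y * z := R.injective (by rw [map_mul, hy, hz, hw, hprod])
  apply rle_of_le
  rw [rlen_mul_comm, hwyz, mul_inv_cancel_right, ← hwyz, R.rlen_eq_length H ht htΦ hz,
    R.rlen_eq_length H hl.toIsUnitriangular hl.mem hw]
  omega

theorem listSpan_le_of_rle (R : IsReflectionRep cs ρ E Φ) (H : IsRootSystem E Φ)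
    (hzw : rle cs z w) (hz : ρ z = reflectionProd E t) (hlen : t.length = rlen cs z)
    (hl : IsSimpleSystem E Φ l) (hw : ρ w = reflectionProd E l) : listSpan t ≤ listSpan l := by
  obtain ⟨t', -, hlen', ht'⟩ := R.exists_reflectionProd_eq (z⁻¹ * w)
  have heq : reflectionProd E l = reflectionProd E (t ++ t') := by
    rw [reflectionProd_append, ← hz, ht', ← map_mul, mul_inv_cancel_left, hw]
  have hlenw := R.rlen_eq_length H hl.toIsUnitriangular hl.mem hw
  unfold rle at hzw
  rw [hl.listSpan_eq_of_reflectionProd_eq H.pos heq (by rw [List.length_append]; omega)]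
  exact listSpan_mono (List.subset_append_left t t')

theorem exists_isSubsystem (R : IsReflectionRep cs ρ E Φ) (H : IsRootSystem E Φ)
    (hl : IsSimpleSystem E Φ l) (hγ : ρ γ = reflectionProd E l) (hw : rle cs w γ) :
    ∃ k, IsSubsystem E Φ l k ∧ ρ w = reflectionProd E k := by
  obtain ⟨t₁, -, hlen₁, hw₁⟩ := R.exists_reflectionProd_eq w
  obtain ⟨t₂, ht₂, hlen₂, hw₂⟩ := R.exists_reflectionProd_eq (w⁻¹ * γ)
  have hlen := R.rlen_eq_length H hl.toIsUnitriangular hl.mem hγ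
  unfold rle at hw
  obtain ⟨k, hk, hprod⟩ := hl.exists_subsystem_reflectionProd_eq H ht₂ (l' := t₁)
    (by rw [← hγ, hw₁, hw₂, ← map_mul, mul_inv_cancel_left]) (by omega)
  exact ⟨k, hk, by rw [hprod, hw₁]⟩

/-- The order on the interval below a Coxeter element is the inclusion of spans, so a unitriangular
basis of the span of the common roots of `u` and `v` yields their meet. -/
theorem exists_meet (R : IsReflectionRep cs ρ E Φ) (H : IsRootSystem E Φ)
    (hl : IsSimpleSystem E Φ l) (hγ : ρ γ = reflectionProd E l) (hu : rle cs u γ)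
    (hv : rle cs v γ) :
    ∃ h, rle cs h u ∧ rle cs h v ∧ ∀ z, rle cs z u → rle cs z v → rle cs z h := by
  obtain ⟨lu, hlu, hρu⟩ := R.exists_isSubsystem H hl hγ hu
  obtain ⟨lv, hlv, hρv⟩ := R.exists_isSubsystem H hl hγ hv
  obtain ⟨t, ht, htΦ, hmax⟩ := hlu.exists_meet H hl hlv
  have hroots : ∀ a ∈ t, a ∈ Φ := fun a ha => (htΦ a ha).1
  obtain ⟨h, hρh, -⟩ := R.exists_map_eq hroots
  have hhu : rle cs h u := R.rle_of_listSpan_le H ht hroots hρh hlu.toIsSimpleSystem hρu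
    (listSpan_le.2 fun a ha => (htΦ a ha).2.1)
  have hhv : rle cs h v := R.rle_of_listSpan_le H ht hroots hρh hlv.toIsSimpleSystem hρv
    (listSpan_le.2 fun a ha => (htΦ a ha).2.2)
  refine ⟨h, hhu, hhv, fun z hzu hzv => ?_⟩
  obtain ⟨lz, hlz, hρz⟩ := R.exists_isSubsystem H hl hγ (rle_trans hzu hu)
  obtain ⟨lh, hlh, hρh'⟩ := R.exists_isSubsystem H hl hγ (rle_trans hhu hu)
  have hlenz := (R.rlen_eq_length H hlz.toIsUnitriangular hlz.mem hρz).symm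
  have hspan : listSpan lh = listSpan t :=
    hlh.listSpan_eq_of_reflectionProd_eq H.pos (hρh'.symm.trans hρh)
      (ht.length_le_of_reflectionProd_eq H.pos (hρh.symm.trans hρh'))
  refine R.rle_of_listSpan_le H hlz.toIsUnitriangular hlz.mem hρz hlh.toIsSimpleSystem hρh'
    (listSpan_le.2 fun a ha => hspan ▸ hmax a (hlz.mem a ha) ⟨?_, ?_⟩)
  · exact R.listSpan_le_of_rle H hzu hρz hlenz hlu.toIsSimpleSystem hρu (mem_listSpan ha)
  · exact R.listSpan_le_of_rle H hzv hρz hlenz hlv.toIsSimpleSystem hρv (mem_listSpan ha)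

end IsReflectionRep

/-! ### Pairs of reflections -/

section Dihedral

variable {V : Type*} [AddCommGroup V] [Module ℝ V] {E : LinearMap.BilinForm ℝ V} {a b : V} {φ : ℝ}

theorem formReflection_sin_combination (ha : E a a = 1) (hab : E a b + E b a = -2 * Real.cos φ)
    (θ : ℝ) :
    formReflection E a (Real.sin (θ + φ) • b + Real.sin θ • a) =
      Real.sin (θ + φ) • b + Real.sin (θ + 2 * φ) • a := by
  have hsin : Real.sin (θ + 2 * φ) = 2 * Real.cos φ * Real.sin (θ + φ) - Real.sin θ := by
    have hadd := Real.sin_add (θ + φ) φ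
    have hsub := Real.sin_sub (θ + φ) φ
    rw [add_assoc, ← two_mul] at hadd
    rw [add_sub_cancel_right] at hsub
    linarith
  have hform : E a (Real.sin (θ + φ) • b + Real.sin θ • a) +
      E (Real.sin (θ + φ) • b + Real.sin θ • a) a =
        Real.sin (θ + φ) * (-2 * Real.cos φ) + 2 * Real.sin θ := by
    rw [← hab]
    simp only [map_add, map_smul, LinearMap.add_apply, LinearMap.smul_apply, smul_eq_mul, ha]
    ring
  rw [formReflection_apply, hform, hsin]
  module

theorem formReflection_mul_pow_sin_combination (ha : E a a = 1) (hb : E b b = 1)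
    (hab : E a b + E b a = -2 * Real.cos φ) (n : ℕ) (θ : ℝ) :
    ((formReflection E a * formReflection E b) ^ n) (Real.sin (θ + φ) • a + Real.sin θ • b) =
      Real.sin (θ + n * (2 * φ) + φ) • a + Real.sin (θ + n * (2 * φ)) • b := by
  induction n generalizing θ with
  | zero => simp
  | succ n ih =>
    have hstep := formReflection_sin_combination ha hab (θ + φ)
    rw [add_assoc, ← two_mul] at hstep
    rw [pow_succ, Module.End.mul_apply, Module.End.mul_apply,
      formReflection_sin_combination hb ((add_comm _ _).trans hab), add_comm, hstep, add_comm,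
      show θ + φ + 2 * φ = θ + 2 * φ + φ by ring, ih]
    push_cast
    congr 3 <;> ring

theorem formReflection_eq_self {x : V} (h : E a x + E x a = 0) : formReflection E a x = x := by
  rw [formReflection_apply, h, zero_smul, sub_zero]

theorem exists_formReflection_fixed (ha : E a a = 1) (hb : E b b = 1)
    (hab : E a b + E b a = -2 * Real.cos φ) (hsin : Real.sin φ ≠ 0) (x : V) :
    ∃ u v : ℝ, formReflection E a (x - (u • a + v • b)) = x - (u • a + v • b) ∧
      formReflection E b (x - (u • a + v • b)) = x - (u • a + v • b) := by
  have hne : 1 - Real.cos φ ^ 2 ≠ 0 := by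
    rw [← Real.sin_sq]
    exact pow_ne_zero 2 hsin
  refine ⟨(E a x + E x a + Real.cos φ * (E b x + E x b)) / (2 * (1 - Real.cos φ ^ 2)),
    (Real.cos φ * (E a x + E x a) + (E b x + E x b)) / (2 * (1 - Real.cos φ ^ 2)), ?_, ?_⟩
  · refine formReflection_eq_self ?_
    simp only [map_add, map_sub, map_smul, LinearMap.add_apply, LinearMap.sub_apply,
      LinearMap.smul_apply, smul_eq_mul, ha]
    field_simp
    linear_combination -(Real.cos φ * (E a x + E x a) + (E b x + E x b)) * hab
  · refine formReflection_eq_self ?_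
    simp only [map_add, map_sub, map_smul, LinearMap.add_apply, LinearMap.sub_apply,
      LinearMap.smul_apply, smul_eq_mul, hb]
    field_simp
    linear_combination -(E a x + E x a + Real.cos φ * (E b x + E x b)) * hab

theorem formReflection_mul_pow_eq_one (ha : E a a = 1) (hb : E b b = 1)
    (hab : E a b + E b a = -2 * Real.cos φ) (hsin : Real.sin φ ≠ 0) {m : ℕ}
    (hm : m * φ = Real.pi) : (formReflection E a * formReflection E b) ^ m = 1 := by
  have hfix (θ : ℝ) : ((formReflection E a * formReflection E b) ^ m)
      (Real.sin (θ + φ) • a + Real.sin θ • b) = Real.sin (θ + φ) • a + Real.sin θ • b := by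
    rw [formReflection_mul_pow_sin_combination ha hb hab,
      show (m : ℝ) * (2 * φ) = 2 * Real.pi by linarith, add_right_comm, Real.sin_add_two_pi,
      Real.sin_add_two_pi]
  have hfixa : ((formReflection E a * formReflection E b) ^ m) a = a := by
    have h := hfix 0
    simp only [zero_add, Real.sin_zero, zero_smul, add_zero, map_smul] at h
    exact smul_right_injective V hsin h
  have hfixb : ((formReflection E a * formReflection E b) ^ m) b = b := by
    have h := hfix (-φ)
    simp only [neg_add_cancel, Real.sin_zero, zero_smul, zero_add, map_smul, Real.sin_neg] at h
    exact smul_right_injective V (neg_ne_zero.2 hsin) h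
  ext x
  obtain ⟨u, v, hza, hzb⟩ := exists_formReflection_fixed ha hb hab hsin x
  have hz : ((formReflection E a * formReflection E b) ^ m) (x - (u • a + v • b)) =
      x - (u • a + v • b) := by
    rw [Module.End.pow_apply]
    exact Function.IsFixedPt.iterate (by rw [Function.IsFixedPt, Module.End.mul_apply, hzb, hza]) m
  rwa [map_sub, map_add, map_smul, map_smul, hfixa, hfixb, sub_left_inj] at hz

end Dihedral

/-! ### Dihedral factors -/

section DihedralFactor

variable (cs : CoxeterSystem M W)

theorem not_isRightDescent_of_length_eq {w' : W} {i j : B} {k : ℕ}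
    (hlen : cs.length (w' * cs.wordProd (CoxeterSystem.alternatingWord i j (k + 1))) =
      cs.length w' + (k + 1)) : ¬cs.IsRightDescent w' (if Even k then j else i) := by
  have hmul := cs.length_mul_le (w' * cs.simple (if Even k then j else i))
    (cs.wordProd (CoxeterSystem.alternatingWord i j k))
  have hword := cs.length_wordProd_le (CoxeterSystem.alternatingWord i j k)
  rw [CoxeterSystem.length_alternatingWord] at hword
  rw [mul_assoc, ← cs.wordProd_cons, ← CoxeterSystem.alternatingWord_succ', hlen] at hmul
  rw [CoxeterSystem.IsRightDescent]
  omega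

/-- The factorisation with the longest possible right factor in the dihedral subgroup. -/
theorem exists_eq_mul_alternatingWord {w : W} (i : B) {j : B} (hj : cs.IsRightDescent w j) :
    ∃ w' k, w = w' * cs.wordProd (CoxeterSystem.alternatingWord i j (k + 1)) ∧
      cs.length w = cs.length w' + (k + 1) ∧
      ¬cs.IsRightDescent w' i ∧ ¬cs.IsRightDescent w' j := by
  let P (k : ℕ) : Prop := ∃ w', w = w' * cs.wordProd (CoxeterSystem.alternatingWord i j k) ∧
    cs.length w = cs.length w' + k
  obtain ⟨k, ⟨w', hw, hlen⟩, hmax⟩ : ∃ k, P (k + 1) ∧ ¬P (k + 2) := by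
    by_contra! hstep
    have hP (k : ℕ) : P (k + 1) := by
      induction k with
      | zero =>
        exact ⟨w * cs.simple j, by simp [CoxeterSystem.alternatingWord],
          (cs.isRightDescent_iff.1 hj).symm⟩
      | succ k ih => exact hstep k ih
    obtain ⟨w', -, h⟩ := hP (cs.length w)
    omega
  have hfirst := not_isRightDescent_of_length_eq cs (hw ▸ hlen)
  have hnext : ¬cs.IsRightDescent w' (if Even (k + 1) then j else i) := by
    intro h
    rw [cs.isRightDescent_iff] at h
    refine hmax ⟨w' * cs.simple (if Even (k + 1) then j else i), ?_, by omega⟩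
    rw [CoxeterSystem.alternatingWord_succ', cs.wordProd_cons, mul_assoc,
      cs.simple_mul_simple_cancel_left, hw]
  refine ⟨w', k, hw, hlen, ?_⟩
  rcases Nat.even_or_odd k with hk | hk
  · rw [if_neg (Nat.even_add_one.not.2 (not_not.2 hk))] at hnext
    rw [if_pos hk] at hfirst
    exact ⟨hnext, hfirst⟩
  · rw [if_pos hk.add_one] at hnext
    rw [if_neg (Nat.not_even_iff_odd.2 hk)] at hfirst
    exact ⟨hfirst, hnext⟩

theorem lt_of_not_isRightDescent_mul_alternatingWord {w' : W} {i j : B} {k : ℕ} (hM : M i j ≠ 0)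
    (hi : ¬cs.IsRightDescent (w' * cs.wordProd (CoxeterSystem.alternatingWord i j k)) i)
    (hlen : cs.length (w' * cs.wordProd (CoxeterSystem.alternatingWord i j k)) =
      cs.length w' + k) : k < M i j := by
  by_contra! hk
  have hword : cs.wordProd (CoxeterSystem.alternatingWord j i (k + 1)) =
      cs.wordProd (CoxeterSystem.alternatingWord i j k) * cs.simple i := by
    rw [CoxeterSystem.alternatingWord_succ, cs.wordProd_concat]
  have hred := cs.not_isReduced_alternatingWord j i (m := k + 1) (by rwa [M.symmetric])
    (by rw [M.symmetric]; omega)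
  have hle := cs.length_wordProd_le (CoxeterSystem.alternatingWord j i (k + 1))
  rw [CoxeterSystem.IsReduced] at hred
  rw [CoxeterSystem.length_alternatingWord] at hred hle
  have hmul := cs.length_mul_le w' (cs.wordProd (CoxeterSystem.alternatingWord j i (k + 1)))
  rw [cs.not_isRightDescent_iff, mul_assoc, ← hword, hlen] at hi
  omega

end DihedralFactor

/-! ### The geometric representation -/

section GeometricRepresentation

variable [DecidableEq B]

/-- The standard basis vectors, which serve as simple roots. -/
def simpleRoot (i : B) : B → ℝ := Pi.single i 1

theorem simpleRoot_ne_zero (i : B) : simpleRoot i ≠ 0 := Pi.single_ne_zero_iff.2 one_ne_zero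

theorem simpleRoot_nonneg (i : B) : 0 ≤ simpleRoot i := Pi.single_nonneg.2 zero_le_one

variable [Fintype B]

/-- The Tits form, with `-cos (π / m)` for a pair of simple roots whose reflections have a
product of order `m`. (If `M i j = 0`, which stands for infinite order, the convention
`π / 0 = 0` gives the correct value `-1`.) -/
noncomputable def titsForm (M : CoxeterMatrix B) : LinearMap.BilinForm ℝ (B → ℝ) :=
  Matrix.toBilin' (Matrix.of fun i j => -Real.cos (Real.pi / M i j))

theorem toBilin'_simpleRoot (A : Matrix B B ℝ) (i j : B) :
    Matrix.toBilin' A (simpleRoot i) (simpleRoot j) = A i j := Matrix.toBilin'_single A i j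

omit [Fintype B] in
theorem bilinForm_ext_simpleRoot [Finite B] {S T : LinearMap.BilinForm ℝ (B → ℝ)}
    (h : ∀ i j, S (simpleRoot i) (simpleRoot j) = T (simpleRoot i) (simpleRoot j)) : S = T :=
  LinearMap.ext_basis (Pi.basisFun ℝ B) (Pi.basisFun ℝ B) fun i j => by
    rw [Pi.basisFun_apply, Pi.basisFun_apply]
    exact h i j

theorem titsForm_simpleRoot (i j : B) :
    titsForm M (simpleRoot i) (simpleRoot j) = -Real.cos (Real.pi / M i j) :=
  toBilin'_simpleRoot _ i j

theorem titsForm_comm (x y : B → ℝ) : titsForm M x y = titsForm M y x := by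
  have h : titsForm M = (titsForm M).flip := bilinForm_ext_simpleRoot fun i j => by
    rw [LinearMap.BilinForm.flip_apply, titsForm_simpleRoot, titsForm_simpleRoot, M.symmetric]
  exact LinearMap.congr_fun₂ h x y

theorem titsForm_simpleRoot_self (i : B) : titsForm M (simpleRoot i) (simpleRoot i) = 1 := by
  simp [titsForm_simpleRoot]

theorem titsForm_simpleRoot_add (i j : B) :
    titsForm M (simpleRoot i) (simpleRoot j) + titsForm M (simpleRoot j) (simpleRoot i) =
      -2 * Real.cos (Real.pi / M i j) := by
  rw [titsForm_comm (simpleRoot j), titsForm_simpleRoot]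
  ring

theorem sin_pi_div_pos {m : ℕ} (hm : 2 ≤ m) : 0 < Real.sin (Real.pi / m) := by
  have hm' : (2 : ℝ) ≤ m := by exact_mod_cast hm
  exact Real.sin_pos_of_pos_of_lt_pi (div_pos Real.pi_pos (by linarith))
    (div_lt_self Real.pi_pos (by linarith))

theorem isLiftable_formReflection_titsForm :
    M.IsLiftable fun i => formReflection (titsForm M) (simpleRoot i) := by
  intro i j
  rcases eq_or_ne i j with rfl | hij
  · rw [formReflection_mul_self (titsForm_simpleRoot_self i), one_pow]
  rcases eq_or_ne (M i j) 0 with hM | hM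
  · rw [hM, pow_zero]
  have hM2 : 2 ≤ M i j := by have := M.off_diagonal i j hij; omega
  exact formReflection_mul_pow_eq_one (titsForm_simpleRoot_self i) (titsForm_simpleRoot_self j)
    (titsForm_simpleRoot_add i j) (sin_pi_div_pos hM2).ne' (by field_simp)

/-- The geometric representation of a Coxeter group. -/
noncomputable def geomRep (cs : CoxeterSystem M W) : W →* Module.End ℝ (B → ℝ) :=
  cs.lift ⟨_, isLiftable_formReflection_titsForm⟩

variable (cs : CoxeterSystem M W)

theorem geomRep_simple (i : B) :
    geomRep cs (cs.simple i) = formReflection (titsForm M) (simpleRoot i) :=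
  cs.lift_apply_simple isLiftable_formReflection_titsForm i

theorem geomRep_mul_simple_simpleRoot (w : W) (i : B) :
    geomRep cs (w * cs.simple i) (simpleRoot i) = -geomRep cs w (simpleRoot i) := by
  rw [map_mul, Module.End.mul_apply, geomRep_simple,
    formReflection_self (titsForm_simpleRoot_self i), map_neg]

theorem titsForm_geomRep (w : W) (x y : B → ℝ) :
    titsForm M (geomRep cs w x) (geomRep cs w y) = titsForm M x y := by
  induction w using cs.simple_induction_left generalizing x y with
  | one => simp
  | mul_simple_left w i ih =>
    rw [map_mul, Module.End.mul_apply, Module.End.mul_apply, geomRep_simple, ← ih x y]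
    simp only [formReflection_apply, titsForm_comm _ (simpleRoot i), map_sub, map_smul,
      LinearMap.sub_apply, LinearMap.smul_apply, titsForm_simpleRoot_self, smul_eq_mul]
    ring

theorem geomRep_geomRep_inv (w : W) (x : B → ℝ) : geomRep cs w (geomRep cs w⁻¹ x) = x := by
  rw [← Module.End.mul_apply, ← map_mul, mul_inv_cancel, map_one, Module.End.one_apply]

theorem geomRep_conj_simple (w : W) (i : B) :
    geomRep cs (w * cs.simple i * w⁻¹) =
      formReflection (titsForm M) (geomRep cs w (simpleRoot i)) := by
  refine LinearMap.ext fun x => ?_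
  have h := titsForm_geomRep cs w (simpleRoot i) (geomRep cs w⁻¹ x)
  rw [geomRep_geomRep_inv] at h
  simp only [map_mul, Module.End.mul_apply, geomRep_simple, formReflection_apply,
    titsForm_comm _ (simpleRoot i), titsForm_comm x, map_sub, map_smul, geomRep_geomRep_inv, h]

section Positivity

/-- The dot product averaged over the geometric representation, up to the order of the group. -/
noncomputable def invariantForm [Fintype W] : LinearMap.BilinForm ℝ (B → ℝ) :=
  ∑ w : W, (dotProductBilin ℝ ℝ).compl₁₂ (geomRep cs w) (geomRep cs w)

theorem invariantForm_apply [Fintype W] (x y : B → ℝ) :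
    invariantForm cs x y = ∑ w : W, geomRep cs w x ⬝ᵥ geomRep cs w y := by
  simp [invariantForm, LinearMap.sum_apply]

theorem invariantForm_comm [Fintype W] (x y : B → ℝ) :
    invariantForm cs x y = invariantForm cs y x := by
  simp only [invariantForm_apply, dotProduct_comm]

theorem invariantForm_geomRep [Fintype W] (v : W) (x y : B → ℝ) :
    invariantForm cs (geomRep cs v x) (geomRep cs v y) = invariantForm cs x y := by
  rw [invariantForm_apply, invariantForm_apply,
    ← Equiv.sum_comp (Equiv.mulRight v) fun w => geomRep cs w x ⬝ᵥ geomRep cs w y]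
  simp only [Equiv.coe_mulRight, map_mul, Module.End.mul_apply]

theorem invariantForm_pos [Fintype W] {x : B → ℝ} (hx : x ≠ 0) : 0 < invariantForm cs x x := by
  have hdot (y : B → ℝ) : 0 ≤ y ⬝ᵥ y := Finset.sum_nonneg fun i _ => mul_self_nonneg (y i)
  rw [invariantForm_apply]
  refine Finset.sum_pos' (fun w _ => hdot _) ⟨1, Finset.mem_univ _, ?_⟩
  rw [map_one, Module.End.one_apply]
  exact (hdot x).lt_of_ne' (dotProduct_self_eq_zero.not.2 hx)

theorem invariantForm_simpleRoot [Fintype W] (i : B) (y : B → ℝ) :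
    invariantForm cs (simpleRoot i) y =
      titsForm M (simpleRoot i) y * invariantForm cs (simpleRoot i) (simpleRoot i) := by
  have h := invariantForm_geomRep cs (cs.simple i) (simpleRoot i) y
  rw [geomRep_simple, formReflection_self (titsForm_simpleRoot_self i), formReflection_apply,
    titsForm_comm y] at h
  simp only [map_neg, map_sub, map_smul, LinearMap.neg_apply, smul_eq_mul] at h
  linarith

/-- Normalising the simple roots turns the invariant form into the Tits form. -/
theorem exists_titsForm_eq_invariantForm [Fintype W] :
    ∃ c : B → ℝ, (∀ i, c i ≠ 0) ∧ ∀ x, titsForm M x x = invariantForm cs (c * x) (c * x) := by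
  let d (i : B) : ℝ := invariantForm cs (simpleRoot i) (simpleRoot i)
  let c (i : B) : ℝ := (√(d i))⁻¹
  have hd (i : B) : 0 < d i := invariantForm_pos cs (simpleRoot_ne_zero i)
  have hc (i : B) : c i * c i * d i = 1 := by
    have hsq : √(d i) * √(d i) = d i := Real.mul_self_sqrt (hd i).le
    rw [← mul_inv, hsq, inv_mul_cancel₀ (hd i).ne']
  have hcsimple (i : B) : c * simpleRoot i = c i • simpleRoot i := by
    ext j
    rcases eq_or_ne j i with rfl | hij <;> simp [simpleRoot, *]
  suffices titsForm M =
      (invariantForm cs).compl₁₂ (LinearMap.mulLeft ℝ c) (LinearMap.mulLeft ℝ c) from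
    ⟨c, fun i => inv_ne_zero (Real.sqrt_pos.2 (hd i)).ne', fun x => LinearMap.congr_fun₂ this x x⟩
  refine bilinForm_ext_simpleRoot fun i j => ?_
  have hij : invariantForm cs (simpleRoot i) (simpleRoot j) =
      titsForm M (simpleRoot i) (simpleRoot j) * d i := invariantForm_simpleRoot cs i _
  have hji : invariantForm cs (simpleRoot i) (simpleRoot j) =
      titsForm M (simpleRoot i) (simpleRoot j) * d j := by
    rw [invariantForm_comm, titsForm_comm, invariantForm_simpleRoot]
  simp only [LinearMap.compl₁₂_apply, LinearMap.mulLeft_apply, hcsimple, map_smul,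
    LinearMap.smul_apply, smul_eq_mul]
  rcases eq_or_ne (titsForm M (simpleRoot i) (simpleRoot j)) 0 with h0 | h0
  · simp [hij, h0]
  · have hcc : c i = c j := by
      simp only [c, mul_left_cancel₀ h0 (hij.symm.trans hji)]
    rw [hij, ← hcc]
    linear_combination -titsForm M (simpleRoot i) (simpleRoot j) * hc i

theorem titsForm_pos (cs : CoxeterSystem M W) [Finite W] {x : B → ℝ} (hx : x ≠ 0) :
    0 < titsForm M x x := by
  have := Fintype.ofFinite W
  obtain ⟨c, hc, h⟩ := exists_titsForm_eq_invariantForm cs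
  rw [h]
  refine invariantForm_pos cs fun hcx => hx (funext fun i => ?_)
  exact (mul_eq_zero.1 (congrFun hcx i)).resolve_left (hc i)

omit [DecidableEq B] [Fintype B] in
theorem two_le_of_ne [Finite B] (cs : CoxeterSystem M W) [Finite W] {i j : B} (hij : i ≠ j) :
    2 ≤ M i j := by
  classical
  have := Fintype.ofFinite B
  have h0 : M i j ≠ 0 := by
    intro h0
    have hne : simpleRoot i + simpleRoot j ≠ 0 := fun h => by
      simpa [simpleRoot, hij] using congrFun h i
    have hpos := titsForm_pos cs hne
    simp only [map_add, LinearMap.add_apply, titsForm_simpleRoot_self,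
      titsForm_comm (simpleRoot j) (simpleRoot i), titsForm_simpleRoot, h0] at hpos
    norm_num at hpos
  have h1 := M.off_diagonal i j hij
  omega

end Positivity

/-- On the plane of two simple roots, the geometric representation is that of a dihedral group. -/
theorem geomRep_alternatingWord (i j : B) (k : ℕ) :
    Real.sin (Real.pi / M i j) •
        geomRep cs (cs.wordProd (CoxeterSystem.alternatingWord i j k)) (simpleRoot i) =
      Real.sin (k * (Real.pi / M i j) + Real.pi / M i j) • simpleRoot (if Even k then i else j) +
        Real.sin (k * (Real.pi / M i j)) • simpleRoot (if Even k then j else i) := by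
  induction k with
  | zero => simp [CoxeterSystem.alternatingWord]
  | succ k ih =>
    have hk : ((k + 1 : ℕ) : ℝ) * (Real.pi / M i j) =
        k * (Real.pi / M i j) + Real.pi / M i j := by
      push_cast; ring
    rw [CoxeterSystem.alternatingWord_succ', cs.wordProd_cons, map_mul, Module.End.mul_apply,
      ← map_smul, ih, geomRep_simple, hk, add_assoc (_ * _), ← two_mul]
    split_ifs with heven hodd hodd
    · exact absurd heven (Nat.even_add_one.1 hodd)
    · rw [formReflection_sin_combination (titsForm_simpleRoot_self j)
        (by rw [titsForm_simpleRoot_add, M.symmetric]), add_comm]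
    · rw [formReflection_sin_combination (titsForm_simpleRoot_self i)
        (titsForm_simpleRoot_add i j), add_comm]
    · exact absurd (Nat.even_add_one.2 heven) hodd

theorem exists_geomRep_alternatingWord_eq {i j : B} (hij : i ≠ j) {k : ℕ} (hk : k < M i j) :
    ∃ p q : ℝ, 0 ≤ p ∧ 0 ≤ q ∧
      geomRep cs (cs.wordProd (CoxeterSystem.alternatingWord i j k)) (simpleRoot i) =
        p • simpleRoot i + q • simpleRoot j := by
  have hM : 2 ≤ M i j := by have := M.off_diagonal i j hij; omega
  have hsin := sin_pi_div_pos hM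
  have hle : (k : ℝ) * (Real.pi / M i j) + Real.pi / M i j ≤ Real.pi := by
    have hk' : (k : ℝ) + 1 ≤ M i j := by exact_mod_cast hk
    calc (k : ℝ) * (Real.pi / M i j) + Real.pi / M i j = (k + 1) * (Real.pi / M i j) := by ring
      _ ≤ M i j * (Real.pi / M i j) := by gcongr
      _ = Real.pi := by field_simp
  have hφ : 0 ≤ Real.pi / M i j := by positivity
  have hp : 0 ≤ Real.sin (k * (Real.pi / M i j) + Real.pi / M i j) :=
    Real.sin_nonneg_of_nonneg_of_le_pi (by positivity) hle
  have hq : 0 ≤ Real.sin (k * (Real.pi / M i j)) :=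
    Real.sin_nonneg_of_nonneg_of_le_pi (by positivity) (by linarith)
  have h := geomRep_alternatingWord cs i j k
  rw [← eq_inv_smul_iff₀ hsin.ne', smul_add, smul_smul, smul_smul] at h
  rw [h]
  split_ifs
  · exact ⟨_, _, by positivity, by positivity, rfl⟩
  · exact ⟨_, _, by positivity, by positivity, add_comm _ _⟩

theorem geomRep_simpleRoot_nonneg [Finite W] {w : W} {i : B} (hi : ¬cs.IsRightDescent w i) :
    0 ≤ geomRep cs w (simpleRoot i) := by
  induction hn : cs.length w using Nat.strong_induction_on generalizing w i with
  | _ n ih =>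
    subst hn
    rcases eq_or_ne w 1 with rfl | hw
    · rw [map_one]
      exact simpleRoot_nonneg i
    obtain ⟨j, hj⟩ := cs.exists_rightDescent_of_ne_one hw
    have hij : i ≠ j := by rintro rfl; exact hi hj
    obtain ⟨w', k, rfl, hlen, hi', hj'⟩ := exists_eq_mul_alternatingWord cs i hj
    have hk := lt_of_not_isRightDescent_mul_alternatingWord cs
      (by have := two_le_of_ne cs hij; omega) hi hlen
    obtain ⟨p, q, hp, hq, h⟩ := exists_geomRep_alternatingWord_eq cs hij hk
    rw [map_mul, Module.End.mul_apply, h, map_add, map_smul, map_smul]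
    exact add_nonneg (smul_nonneg hp (ih _ (by omega) hi' rfl))
      (smul_nonneg hq (ih _ (by omega) hj' rfl))

theorem geomRep_simpleRoot_nonpos [Finite W] {w : W} {i : B} (hi : cs.IsRightDescent w i) :
    0 ≤ -geomRep cs w (simpleRoot i) := by
  rw [← geomRep_mul_simple_simpleRoot]
  exact geomRep_simpleRoot_nonneg cs (cs.isRightDescent_iff_not_isRightDescent_mul.1 hi)

theorem geomRep_injective [Finite W] : Function.Injective (geomRep cs) := by
  rw [injective_iff_map_eq_one]
  intro w hw
  by_contra hne
  obtain ⟨i, hi⟩ := cs.exists_rightDescent_of_ne_one hne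
  have hneg := geomRep_simpleRoot_nonpos cs hi
  rw [hw, Module.End.one_apply, neg_nonneg] at hneg
  exact simpleRoot_ne_zero i (hneg.antisymm (simpleRoot_nonneg i))

/-! ### The form attached to a Coxeter element -/

/-- The triangular form attached to an ordering `l` of the simple reflections; its
symmetrisation is twice the Tits form. -/
noncomputable def seifertForm (M : CoxeterMatrix B) (l : List B) :
    LinearMap.BilinForm ℝ (B → ℝ) :=
  Matrix.toBilin' (Matrix.of fun i j => if i = j then 1 else
    if l.idxOf i < l.idxOf j then -2 * Real.cos (Real.pi / M i j) else 0)

theorem seifertForm_simpleRoot (l : List B) (i j : B) :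
    seifertForm M l (simpleRoot i) (simpleRoot j) = if i = j then 1 else
      if l.idxOf i < l.idxOf j then -2 * Real.cos (Real.pi / M i j) else 0 :=
  toBilin'_simpleRoot _ i j

theorem seifertForm_add_swap {l : List B} (hl : ∀ i, i ∈ l) (x y : B → ℝ) :
    seifertForm M l x y + seifertForm M l y x = 2 * titsForm M x y := by
  suffices seifertForm M l + (seifertForm M l).flip = (2 : ℝ) • titsForm M from
    LinearMap.congr_fun₂ this x y
  refine bilinForm_ext_simpleRoot fun i j => ?_
  simp only [LinearMap.add_apply, LinearMap.BilinForm.flip_apply, LinearMap.smul_apply,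
    smul_eq_mul, seifertForm_simpleRoot]
  rcases eq_or_ne i j with rfl | hij
  · rw [if_pos rfl, titsForm_simpleRoot_self]
    norm_num
  · have hne : l.idxOf i ≠ l.idxOf j := fun h => hij ((List.idxOf_inj (hl i)).1 h)
    rw [if_neg hij, if_neg hij.symm, titsForm_simpleRoot, M.symmetric j i]
    rcases hne.lt_or_gt with h | h
    · rw [if_pos h, if_neg h.not_gt]; ring
    · rw [if_neg h.not_gt, if_pos h]; ring

omit [Fintype B] in
theorem mem_listCone_simpleRoot [Finite B] {l : List B} (hl : ∀ i, i ∈ l) {x : B → ℝ}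
    (hx : 0 ≤ x) : x ∈ listCone (l.map simpleRoot) := by
  have := Fintype.ofFinite B
  rw [show x = ∑ i, x i • simpleRoot i from pi_eq_sum_univ' x]
  exact sum_mem fun i _ => PointedCone.smul_mem _ (hx i) (mem_listCone (List.mem_map_of_mem (hl i)))

/-- The roots of the geometric representation. -/
def geomRoots : Set (B → ℝ) := Set.range fun p : W × B => geomRep cs p.1 (simpleRoot p.2)

section Symmetrisation

variable {E : LinearMap.BilinForm ℝ (B → ℝ)} (hE : ∀ x y, E x y + E y x = 2 * titsForm M x y)

include hE

theorem form_self_eq_titsForm (x : B → ℝ) : E x x = titsForm M x x := by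
  have h := hE x x
  linarith

theorem geomRep_conj_simple_eq_formReflection (w : W) (i : B) :
    geomRep cs (w * cs.simple i * w⁻¹) = formReflection E (geomRep cs w (simpleRoot i)) := by
  rw [geomRep_conj_simple]
  refine LinearMap.ext fun x => ?_
  rw [formReflection_apply, formReflection_apply, hE, titsForm_comm x, two_mul]

theorem isReflectionRep_geomRep [Finite W] :
    IsReflectionRep cs (geomRep cs) E (geomRoots cs) where
  injective := geomRep_injective cs
  exists_root := by
    rintro _ ⟨w, i, rfl⟩
    exact ⟨_, ⟨(w, i), rfl⟩, geomRep_conj_simple_eq_formReflection cs hE w i⟩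
  exists_isReflection := by
    rintro _ ⟨⟨w, i⟩, rfl⟩
    exact ⟨_, ⟨w, i, rfl⟩, geomRep_conj_simple_eq_formReflection cs hE w i⟩

theorem isRootSystem_geomRoots [Finite W] : IsRootSystem E (geomRoots cs) where
  pos x hx := form_self_eq_titsForm hE x ▸ titsForm_pos cs hx
  one := by
    rintro _ ⟨⟨w, i⟩, rfl⟩
    rw [form_self_eq_titsForm hE, titsForm_geomRep, titsForm_simpleRoot_self]
  formReflection_mem := by
    rintro a ha _ ⟨⟨w, i⟩, rfl⟩
    obtain ⟨t, -, ht⟩ := (isReflectionRep_geomRep cs hE).exists_isReflection a ha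
    exact ⟨(t * w, i), by simp only [map_mul, Module.End.mul_apply, ht]⟩
  isOfFinOrder _ hl := (isReflectionRep_geomRep cs hE).isOfFinOrder hl

theorem geomRep_conj_wordProd (v : W) (l : List B) :
    geomRep cs (v * cs.wordProd l * v⁻¹) =
      reflectionProd E (l.map fun i => geomRep cs v (simpleRoot i)) := by
  induction l with
  | nil => simp [reflectionProd]
  | cons i l ih =>
    rw [List.map_cons, reflectionProd_cons, ← ih, ← geomRep_conj_simple_eq_formReflection cs hE,
      ← map_mul, cs.wordProd_cons]
    congr 1
    group

end Symmetrisation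

/-- The transport of `seifertForm` by `v`, which makes the `v`-translates of the simple roots a
unitriangular list. -/
noncomputable def coxeterForm (v : W) (l : List B) : LinearMap.BilinForm ℝ (B → ℝ) :=
  (seifertForm M l).compl₁₂ (geomRep cs v⁻¹) (geomRep cs v⁻¹)

theorem coxeterForm_add_swap (v : W) {l : List B} (hl : ∀ i, i ∈ l) (x y : B → ℝ) :
    coxeterForm cs v l x y + coxeterForm cs v l y x = 2 * titsForm M x y := by
  simp only [coxeterForm, LinearMap.compl₁₂_apply, seifertForm_add_swap hl, titsForm_geomRep]

theorem coxeterForm_geomRep_simpleRoot (v : W) (l : List B) (i j : B) :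
    coxeterForm cs v l (geomRep cs v (simpleRoot i)) (geomRep cs v (simpleRoot j)) =
      seifertForm M l (simpleRoot i) (simpleRoot j) := by
  have hinv (x : B → ℝ) : geomRep cs v⁻¹ (geomRep cs v x) = x := by
    simpa only [inv_inv] using geomRep_geomRep_inv cs v⁻¹ x
  rw [coxeterForm, LinearMap.compl₁₂_apply, hinv, hinv]

theorem isUnitriangular_coxeterForm (v : W) {l : List B} (hnodup : l.Nodup) :
    IsUnitriangular (coxeterForm cs v l) (l.map fun i => geomRep cs v (simpleRoot i)) where
  one := by
    simp only [List.mem_map, forall_exists_index, and_imp, forall_apply_eq_imp_iff₂]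
    intro i _
    rw [coxeterForm_geomRep_simpleRoot, seifertForm_simpleRoot, if_pos rfl]
  pairwise := by
    rw [List.pairwise_map, List.pairwise_iff_getElem]
    intro m n hm hn hmn
    rw [coxeterForm_geomRep_simpleRoot, seifertForm_simpleRoot, hnodup.idxOf_getElem,
      hnodup.idxOf_getElem, if_neg fun h => hmn.ne' (hnodup.getElem_inj_iff.1 h),
      if_neg hmn.not_gt]

theorem isSimpleSystem_coxeterForm [Finite W] (v : W) {l : List B} (hnodup : l.Nodup)
    (hl : ∀ i, i ∈ l) :
    IsSimpleSystem (coxeterForm cs v l) (geomRoots cs)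
      (l.map fun i => geomRep cs v (simpleRoot i)) where
  toIsUnitriangular := isUnitriangular_coxeterForm cs v hnodup
  mem := by
    simp only [List.mem_map, forall_exists_index, and_imp, forall_apply_eq_imp_iff₂]
    exact fun i _ => ⟨(v, i), rfl⟩
  sign := by
    have hcone {x : B → ℝ} (hx : 0 ≤ geomRep cs v⁻¹ x) :
        x ∈ listCone (l.map fun i => geomRep cs v (simpleRoot i)) := by
      have h := map_mem_listCone (geomRep cs v) (mem_listCone_simpleRoot hl hx)
      rwa [geomRep_geomRep_inv, List.map_map] at h
    rintro _ ⟨⟨w, i⟩, rfl⟩ -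
    have hmul : geomRep cs v⁻¹ (geomRep cs w (simpleRoot i)) =
        geomRep cs (v⁻¹ * w) (simpleRoot i) := by rw [map_mul, Module.End.mul_apply]
    by_cases hdesc : cs.IsRightDescent (v⁻¹ * w) i
    · refine Or.inr (hcone ?_)
      rw [map_neg, hmul]
      exact geomRep_simpleRoot_nonpos cs hdesc
    · refine Or.inl (hcone ?_)
      rw [hmul]
      exact geomRep_simpleRoot_nonneg cs hdesc

end GeometricRepresentation

theorem exists_meet_of_isCoxeterElement [Fintype B] [Finite W] {cs : CoxeterSystem M W}
    {γ u v : W} (hγ : IsCoxeterElement cs γ) (hu : rle cs u γ) (hv : rle cs v γ) :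
    ∃ h, rle cs h u ∧ rle cs h v ∧ ∀ z, rle cs z u → rle cs z v → rle cs z h := by
  classical
  obtain ⟨c, l, hnodup, hl, rfl⟩ := hγ
  have hE := coxeterForm_add_swap cs c hl
  exact (isReflectionRep_geomRep cs hE).exists_meet (isRootSystem_geomRoots cs hE)
    (isSimpleSystem_coxeterForm cs c hnodup hl) (geomRep_conj_wordProd cs hE c l) hu hv

/-! ### Cancellation in the positive monoid -/

section Monoid

variable {cs : CoxeterSystem M W} {γ : W}

theorem of_mul_of {w₁ w₂ w₃ : NCGen cs γ} (h : (w₁ : W) * w₂ = w₃)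
    (hlen : rlen cs (w₁ : W) + rlen cs (w₂ : W) = rlen cs (w₃ : W)) :
    PresentedMonoid.of (posRels cs γ) w₁ * PresentedMonoid.of (posRels cs γ) w₂ =
      PresentedMonoid.of (posRels cs γ) w₃ :=
  (Con.eq _).2 (ConGen.Rel.of _ _ ⟨w₁, w₂, w₃, rfl, rfl, h, hlen⟩)

theorem pgen_one : pgen cs γ 1 = 1 := by simp [pgen]

theorem pgen_of (w : NCGen cs γ) : pgen cs γ w = PresentedMonoid.of (posRels cs γ) w :=
  dif_pos w.2

theorem pgen_mul_pgen {a b : W} (hab : rle cs a b) (hb : rle cs b γ) :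
    pgen cs γ a * pgen cs γ (a⁻¹ * b) = pgen cs γ b := by
  by_cases ha : a = 1
  · simp [ha, pgen_one]
  by_cases hc : a⁻¹ * b = 1
  · rw [hc, inv_mul_eq_one.1 hc, pgen_one, mul_one]
  have hb1 : b ≠ 1 := by
    rintro rfl
    exact ha (rle_antisymm hab (one_rle a))
  have hgen := of_mul_of (γ := γ) (w₁ := ⟨a, ha, rle_trans hab hb⟩)
    (w₂ := ⟨a⁻¹ * b, hc, rle_trans (inv_mul_rle hab) hb⟩) (w₃ := ⟨b, hb1, hb⟩)
    (mul_inv_cancel_left a b) hab.symm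
  rwa [← pgen_of, ← pgen_of, ← pgen_of] at hgen

/-- `m` is a meet operation on the interval `[1,γ]` of the reflection order. -/
structure IsMeet (cs : CoxeterSystem M W) (γ : W) (m : W → W → W) : Prop where
  left : ∀ {u v}, rle cs u γ → rle cs v γ → rle cs (m u v) u
  right : ∀ {u v}, rle cs u γ → rle cs v γ → rle cs (m u v) v
  le : ∀ {u v z}, rle cs u γ → rle cs v γ → rle cs z u → rle cs z v → rle cs z (m u v)

theorem exists_isMeet [Fintype B] [Finite W] (hγ : IsCoxeterElement cs γ) :
    ∃ m, IsMeet cs γ m := by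
  have hmeet (u v : W) : ∃ h, rle cs u γ → rle cs v γ →
      rle cs h u ∧ rle cs h v ∧ ∀ z, rle cs z u → rle cs z v → rle cs z h := by
    by_cases huv : rle cs u γ ∧ rle cs v γ
    · obtain ⟨h, hh⟩ := exists_meet_of_isCoxeterElement hγ huv.1 huv.2
      exact ⟨h, fun _ _ => hh⟩
    · exact ⟨1, fun hu hv => absurd ⟨hu, hv⟩ huv⟩
  choose m hm using hmeet
  exact ⟨m, fun hu hv => (hm _ _ hu hv).1, fun hu hv => (hm _ _ hu hv).2.1,
    fun hu hv => (hm _ _ hu hv).2.2 _⟩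

/-- The largest left factor `h` of `a` which `s` can absorb, i.e. such that `s h` is a product of
lengths `ℓ(s) + ℓ(h)` in `[1,γ]`. Here `m` is a meet operation. -/
def absorbed (γ : W) (m : W → W → W) (s a : W) : W := m a (s⁻¹ * γ)

section Meet

variable {m : W → W → W} {s t a : W}

theorem absorbed_rle (hm : IsMeet cs γ m) (hs : rle cs s γ) (ha : rle cs a γ) :
    rle cs (absorbed γ m s a) a := hm.left ha (inv_mul_rle hs)

theorem absorbed_rle_inv_mul (hm : IsMeet cs γ m) (hs : rle cs s γ) (ha : rle cs a γ) :
    rle cs (absorbed γ m s a) (s⁻¹ * γ) := hm.right ha (inv_mul_rle hs)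

theorem mul_absorbed_rle (hm : IsMeet cs γ m) (hs : rle cs s γ) (ha : rle cs a γ) :
    rle cs (s * absorbed γ m s a) γ := mul_rle hs (absorbed_rle_inv_mul hm hs ha)

theorem rle_inv_mul_of_mul_rle (hst : rle cs s (s * t)) (hγ : rle cs (s * t) γ) :
    rle cs t (s⁻¹ * γ) := by
  simpa using rle_inv_mul hst hγ

theorem absorbed_mul_rle_inv_mul (hm : IsMeet cs γ m) (hγ : rle cs (s * t) γ)
    (ha : rle cs a γ) : rle cs (absorbed γ m (s * t) a) (t⁻¹ * (s⁻¹ * γ)) := by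
  simpa [mul_assoc] using absorbed_rle_inv_mul hm hγ ha

theorem absorbed_mul_rle_absorbed (hm : IsMeet cs γ m) (hst : rle cs s (s * t))
    (hγ : rle cs (s * t) γ) (ht : rle cs t γ) (ha : rle cs a γ) :
    rle cs (absorbed γ m (s * t) a) (absorbed γ m t a) :=
  hm.le ha (inv_mul_rle ht) (absorbed_rle hm hγ ha)
    (rle_trans (absorbed_mul_rle_inv_mul hm hγ ha)
      (rle_inv_mul (rle_inv_mul_of_mul_rle hst hγ) (inv_mul_rle (rle_trans hst hγ))))

/-- Absorbing by `t` and then by `s` is the same as absorbing by `s t`, when the lengths of `s` and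
`t` add up. -/
theorem absorbed_mul_absorbed (hm : IsMeet cs γ m) (hst : rle cs s (s * t))
    (hγ : rle cs (s * t) γ) (ht : rle cs t γ) (ha : rle cs a γ) :
    absorbed γ m s (t * absorbed γ m t a) = t * absorbed γ m (s * t) a := by
  have hs := rle_trans hst hγ
  have hta := mul_absorbed_rle hm ht ha
  have hts := rle_inv_mul_of_mul_rle hst hγ
  have hsta := absorbed_mul_rle_inv_mul hm hγ ha
  apply rle_antisymm
  · have htk : rle cs t (absorbed γ m s (t * absorbed γ m t a)) :=
      hm.le hta (inv_mul_rle hs) (rle_mul_right ht (absorbed_rle_inv_mul hm ht ha)) hts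
    have hka : rle cs (t⁻¹ * absorbed γ m s (t * absorbed γ m t a)) a := by
      have h := rle_inv_mul htk (absorbed_rle hm hs hta)
      rw [inv_mul_cancel_left] at h
      exact rle_trans h (absorbed_rle hm ht ha)
    have hkγ : rle cs (t⁻¹ * absorbed γ m s (t * absorbed γ m t a)) ((s * t)⁻¹ * γ) := by
      simpa [mul_assoc] using rle_inv_mul htk (absorbed_rle_inv_mul hm hs hta)
    simpa using mul_rle_mul_left (rle_mul_right hts hsta) (hm.le ha (inv_mul_rle hγ) hka hkγ)
  · exact hm.le hta (inv_mul_rle hs)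
      (mul_rle_mul_left (rle_mul_right ht (absorbed_rle_inv_mul hm ht ha))
        (absorbed_mul_rle_absorbed hm hst hγ ht ha))
      (mul_rle hts hsta)

/-- The action of a generator on pairs `(a, X)`, to be thought of as the partially normalised
product `⟨a⟩X`: the generator absorbs as much of the head `a` as possible. -/
noncomputable def act (hm : IsMeet cs γ m) (s : NCGen cs γ) :
    Function.End ({a : W // rle cs a γ} × PosMonoid cs γ) := fun x =>
  (⟨s * absorbed γ m s x.1, mul_absorbed_rle hm s.2.2 x.1.2⟩,
    pgen cs γ ((absorbed γ m s x.1)⁻¹ * x.1) * x.2)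

theorem act_mul_act (hm : IsMeet cs γ m) {s t w : NCGen cs γ} (hw : (s : W) * t = w)
    (hlen : rlen cs (s : W) + rlen cs (t : W) = rlen cs (w : W)) :
    act hm s * act hm t = act hm w := by
  have hst : rle cs (s : W) (s * t) := by rw [rle, inv_mul_cancel_left, hw, hlen]
  have hγ : rle cs (s * t : W) γ := hw ▸ w.2.2
  funext ⟨⟨a, ha⟩, X⟩
  have hcomp := absorbed_mul_absorbed hm hst hγ t.2.2 ha
  have hle := absorbed_mul_rle_absorbed hm hst hγ t.2.2 ha
  have hta := absorbed_rle hm t.2.2 ha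
  rw [hw] at hcomp hle
  refine Prod.ext (Subtype.ext ?_) ?_
  · change (s : W) * absorbed γ m s (t * absorbed γ m t a) = w * absorbed γ m w a
    rw [hcomp, ← mul_assoc, hw]
  · change pgen cs γ ((absorbed γ m s (t * absorbed γ m t a))⁻¹ * (t * absorbed γ m t a)) *
      (pgen cs γ ((absorbed γ m t a)⁻¹ * a) * X) = pgen cs γ ((absorbed γ m w a)⁻¹ * a) * X
    rw [hcomp, ← mul_assoc,
      ← pgen_mul_pgen (rle_inv_mul hle hta) (rle_trans (inv_mul_rle (rle_trans hle hta)) ha)]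
    congr 3 <;> group

/-- The action `act` extended to the positive monoid. -/
noncomputable def actHom (hm : IsMeet cs γ m) :
    PosMonoid cs γ →* Function.End ({a : W // rle cs a γ} × PosMonoid cs γ) :=
  PresentedMonoid.lift (act hm) (by
    rintro _ _ ⟨w₁, w₂, w₃, rfl, rfl, hw, hlen⟩
    simpa using act_mul_act hm hw hlen)

/-- The product `⟨a⟩X` represented by the pair `(a, X)`. -/
noncomputable def pairEval (x : {a : W // rle cs a γ} × PosMonoid cs γ) : PosMonoid cs γ :=
  pgen cs γ x.1 * x.2

theorem pairEval_act (hm : IsMeet cs γ m) (s : NCGen cs γ)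
    (x : {a : W // rle cs a γ} × PosMonoid cs γ) :
    pairEval (act hm s x) = PresentedMonoid.of (posRels cs γ) s * pairEval x := by
  obtain ⟨⟨a, ha⟩, X⟩ := x
  have hγ := absorbed_rle_inv_mul hm s.2.2 ha
  have hsplit := pgen_mul_pgen (rle_mul_right s.2.2 hγ) (mul_rle s.2.2 hγ)
  rw [inv_mul_cancel_left, pgen_of] at hsplit
  change pgen cs γ (s * absorbed γ m s a) * (pgen cs γ ((absorbed γ m s a)⁻¹ * a) * X) =
    PresentedMonoid.of (posRels cs γ) s * (pgen cs γ a * X)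
  rw [← hsplit, ← pgen_mul_pgen (absorbed_rle hm s.2.2 ha) ha]
  simp only [mul_assoc]

theorem pairEval_actHom (hm : IsMeet cs γ m) (A : PosMonoid cs γ)
    (x : {a : W // rle cs a γ} × PosMonoid cs γ) :
    pairEval (actHom hm A x) = A * pairEval x := by
  induction A using PresentedMonoid.inductionOn with | h A
  induction A using FreeMonoid.inductionOn generalizing x with
  | one =>
    rw [map_one, map_one, one_mul]
    rfl
  | of s => exact pairEval_act hm s x
  | mul A C hA hC =>
    rw [map_mul, map_mul, mul_assoc, ← hC, ← hA]
    rfl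

theorem pairEval_actHom_one (hm : IsMeet cs γ m) (A : PosMonoid cs γ) :
    pairEval (actHom hm A (⟨1, one_rle γ⟩, 1)) = A := by
  rw [pairEval_actHom, pairEval, pgen_one, one_mul, mul_one]

/-- The head `s h` of `act hm s (a, X)` determines `h`, and `⟨a⟩X` is `⟨h⟩` times the second
component `⟨h⁻¹a⟩X`. -/
theorem pairEval_eq_of_act_eq (hm : IsMeet cs γ m) (s : NCGen cs γ)
    {x y : {a : W // rle cs a γ} × PosMonoid cs γ} (h : act hm s x = act hm s y) :
    pairEval x = pairEval y := by
  obtain ⟨⟨a, ha⟩, X⟩ := x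
  obtain ⟨⟨c, hc⟩, Y⟩ := y
  have hhead : (s : W) * absorbed γ m s a = s * absorbed γ m s c :=
    congrArg (fun z => (z.1 : W)) h
  have htail : pgen cs γ ((absorbed γ m s a)⁻¹ * a) * X =
      pgen cs γ ((absorbed γ m s c)⁻¹ * c) * Y := congrArg Prod.snd h
  change pgen cs γ a * X = pgen cs γ c * Y
  rw [← pgen_mul_pgen (absorbed_rle hm s.2.2 ha) ha, ← pgen_mul_pgen (absorbed_rle hm s.2.2 hc) hc,
    mul_assoc, mul_assoc, htail, mul_left_cancel hhead]

end Meet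

theorem left_cancel [Fintype B] [Finite W] (hγ : IsCoxeterElement cs γ) (s : NCGen cs γ)
    {A C : PosMonoid cs γ}
    (h : PresentedMonoid.of (posRels cs γ) s * A = PresentedMonoid.of (posRels cs γ) s * C) :
    A = C := by
  obtain ⟨m, hm⟩ := exists_isMeet hγ
  have hact : actHom hm (PresentedMonoid.of (posRels cs γ) s) = act hm s :=
    PresentedMonoid.lift_of _ _
  have hs : act hm s * actHom hm A = act hm s * actHom hm C := by
    rw [← hact, ← map_mul, ← map_mul, h]
  rw [← pairEval_actHom_one hm A, ← pairEval_actHom_one hm C]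
  exact pairEval_eq_of_act_eq hm s (congrFun hs _)

theorem isCoxeterElement_inv [Fintype B] (hγ : IsCoxeterElement cs γ) :
    IsCoxeterElement cs γ⁻¹ := by
  obtain ⟨v, l, hnodup, hl, rfl⟩ := hγ
  refine ⟨v, l.reverse, List.nodup_reverse.2 hnodup, fun i => List.mem_reverse.2 (hl i), ?_⟩
  rw [cs.wordProd_reverse]
  group

/-- The generator `⟨w⁻¹⟩` of the positive monoid of `γ⁻¹`. The target `γ'` is a variable so that
inversion can be iterated without rewriting `γ⁻¹⁻¹` in types. -/
def invGen {γ' : W} (hγ : γ⁻¹ = γ') (w : NCGen cs γ) : NCGen cs γ' :=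
  ⟨(w : W)⁻¹, inv_ne_one.2 w.2.1, hγ ▸ inv_rle_inv w.2.2⟩

/-- Inversion in `W` as an anti-homomorphism between the positive monoids of `γ` and `γ⁻¹`. -/
def invHom {γ' : W} (hγ : γ⁻¹ = γ') : PosMonoid cs γ →* (PosMonoid cs γ')ᵐᵒᵖ :=
  PresentedMonoid.lift
    (fun w => MulOpposite.op (PresentedMonoid.of (posRels cs γ') (invGen hγ w))) (by
    rintro _ _ ⟨w₁, w₂, w₃, rfl, rfl, h, hlen⟩
    simp only [map_mul, FreeMonoid.lift_eval_of, ← MulOpposite.op_mul]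
    refine congrArg _ (of_mul_of ?_ ?_)
    · simp [invGen, ← h]
    · simp only [invGen, rlen_inv, ← hlen, add_comm])

theorem invHom_invHom {γ' : W} (hγ : γ⁻¹ = γ') (hγ' : γ'⁻¹ = γ) (A : PosMonoid cs γ) :
    (invHom hγ' (invHom hγ A).unop).unop = A := by
  induction A using PresentedMonoid.inductionOn with | h A
  induction A using FreeMonoid.inductionOn with
  | one => simp
  | of s => exact congrArg (PresentedMonoid.of (posRels cs γ)) (Subtype.ext (inv_inv (s : W)))
  | mul A C hA hC =>
    rw [map_mul, map_mul, MulOpposite.unop_mul, map_mul, MulOpposite.unop_mul, hA, hC]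

theorem right_cancel [Fintype B] [Finite W] (hγ : IsCoxeterElement cs γ) (s : NCGen cs γ)
    {A C : PosMonoid cs γ}
    (h : A * PresentedMonoid.of (posRels cs γ) s = C * PresentedMonoid.of (posRels cs γ) s) :
    A = C := by
  have hinv := congrArg (fun X => (invHom (rfl : γ⁻¹ = γ⁻¹) X).unop) h
  simp only [map_mul, MulOpposite.unop_mul] at hinv
  rw [← invHom_invHom (rfl : γ⁻¹ = γ⁻¹) (inv_inv γ) A,
    left_cancel (isCoxeterElement_inv hγ) (invGen rfl s) hinv, invHom_invHom]

end Monoid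

end DualBraid

/-- The positive monoid `Γ₊(W,γ)` has left and right cancellation. -/
theorem posMonoid_cancellation [Fintype B] [Fintype W] (cs : CoxeterSystem M W) (γ : W)
    (hγ : IsCoxeterElement cs γ) (u : W) (hu : u ≠ 1 ∧ rle cs u γ)
    (A C' : PosMonoid cs γ) :
    (PresentedMonoid.of (posRels cs γ) ⟨u, hu⟩ * A =
      PresentedMonoid.of (posRels cs γ) ⟨u, hu⟩ * C' → A = C') ∧
    (A * PresentedMonoid.of (posRels cs γ) ⟨u, hu⟩ =
      C' * PresentedMonoid.of (posRels cs γ) ⟨u, hu⟩ → A = C') :=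
  ⟨DualBraid.left_cancel hγ ⟨u, hu⟩, DualBraid.right_cancel hγ ⟨u, hu⟩⟩
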